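/- arXiv:2603.10404 — 2 statements merged into one kernel-verified Lean document; each statement's English description precedes it below -/
import Mathlib

section
/- Let p > 0 and let (u,v) be a classical solution of the system (S₄) on ℝ⁴ such that u ≥ 0 on ℝ⁴ and the finite total mass condition ∬_{ℝ⁴×ℝ⁴} u²(x)u²(y)/|x−y|² dx dy < ∞ holds. Then there exists a constant C ≥ 0 such that for all x ∈ ℝ⁴: Δv(x) = −(1/(4π²)) ∫_{ℝ⁴} P₄(y)/|x−y|² dy − C. -/
open MeasureTheory Filter Topology
open scoped NNReal

noncomputable section

abbrev E4 := EuclideanSpace ℝ (Fin 4)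

/-- The normalizing constant `C₄ = (∫_{ℝ⁴} (1 − cos(2πζ₁))/|ζ|⁵ dζ)⁻¹`. -/
def C4 : ℝ := (∫ ζ : E4, (1 - Real.cos (2 * Real.pi * ζ 0)) / ‖ζ‖ ^ 5)⁻¹

/-- The assertion `(−Δ)^{1/2} w (x) = h`, i.e. the principal-value limit exists and equals `h`. -/
def HalfLapEq4 (w : E4 → ℝ) (x : E4) (h : ℝ) : Prop :=
  Tendsto (fun ε : ℝ =>
      C4 * ∫ y in {y : E4 | ε ≤ ‖y - x‖}, (w x - w y) / ‖x - y‖ ^ 5)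
    (𝓝[>] (0 : ℝ)) (𝓝 h)

/-- The Euclidean Laplacian `Δw(x) = ∑ᵢ ∂²w/∂xᵢ²`. -/
def lap4 (w : E4 → ℝ) (x : E4) : ℝ :=
  ∑ i : Fin 4,
    fderiv ℝ (fun z => fderiv ℝ w z (EuclideanSpace.single i 1)) x (EuclideanSpace.single i 1)

/-- Local Hölder continuity of a map `g`. -/
def LocHolder4 {F : Type*} [NormedAddCommGroup F] (g : E4 → F) : Prop :=
  ∀ x : E4, ∃ (C a : ℝ≥0) (r : ℝ), 0 < r ∧ 0 < (a : ℝ) ∧ (a : ℝ) ≤ 1 ∧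
    HolderOnWith C a g (Metric.ball x r)

/-- `P₄(y) = (∫ u²(z)/|y−z|² dz) · u²(y)`. -/
def P4 (u : E4 → ℝ) (y : E4) : ℝ := (∫ z : E4, u z ^ 2 / ‖y - z‖ ^ 2) * u y ^ 2

/-- `(u,v)` is a classical solution of the system (S₄) on ℝ⁴. -/
structure IsSolution4 (p : ℝ) (u v : E4 → ℝ) : Prop where
  u_C1 : ContDiff ℝ 1 u
  u_grad_holder : LocHolder4 (fderiv ℝ u)
  u_int : Integrable (fun x : E4 => |u x| / (1 + ‖x‖ ^ 5))
  v_C4 : ContDiff ℝ 4 v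
  eq_u : ∀ x : E4, HalfLapEq4 u x (Real.exp (p * v x))
  eq_v : ∀ x : E4, lap4 (fun z => lap4 v z) x = P4 u x

/-- The finite total mass condition `∬ u²(x)u²(y)/|x−y|² dx dy < ∞`. -/
def FiniteMass4 (u : E4 → ℝ) : Prop :=
  Integrable (fun q : E4 × E4 => u q.1 ^ 2 * u q.2 ^ 2 / ‖q.1 - q.2‖ ^ 2)

/-!
Put `f = Δv`, so that `Δf = P₄ ≥ 0`, and `P₄` is integrable because of the finite total mass. Define
`h(x) = f(x) + (1/4π²) ∫ P₄(y)/|x-y|² dy`. The claim is that `h` is a nonpositive constant. The proof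
never differentiates the Riesz potential: it only uses the weighted means
`wmean k g x r = ∫ g(x + r z) (1-|z|²)₊^k dz`, for which integration by parts gives
`d/dr wmean (k+1) g x r = r / (2(k+2)) * wmean (k+2) (Δg) x r` (`hasDerivAt_wmean`).

* Integrating this identity for `g = f` shows `wmean 2 f x R → (π²/12) h(x)` as `R → ∞`
  (`tendsto_wmean`).
* Moving the half-Laplacian onto `(R² - |x-c|²)₊`, whose half-Laplacian is bounded above by a multiple
  of `R²` on the ball of radius `R` about `c` and is nonpositive outside it, shows that
  `∫ (R² - |x-c|²)₊ e^{pv} ≤ A R⁷`; this uses `u ≥ 0` and the weighted integrability of `u` (`growth`).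
* If `h(x) > 0` for some `x`, the identity for `g = v` makes `wmean 1 v x R` grow quadratically, and
  by Jensen's inequality the means of `e^{pv}` grow like `e^{cR²}`, contradicting the previous bound
  (`limit_nonpos`). Hence `h ≤ 0`.
* The Riesz potential is nonnegative, so `f ≤ h ≤ 0`. Means of the nonnegative function `-f` over
  large balls with different centres are comparable with ratio tending to `1` (`limit_le_limit`), so
  the limit `h` does not depend on the centre, and `C = -h(0)`.
-/

/-! ### Weighted means and their radial derivative -/

/-- The truncated paraboloid `z ↦ (1 - |z|²)₊`; its powers are the averaging weights. -/
def bump (z : E4) : ℝ := max 0 (1 - ‖z‖ ^ 2)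

lemma bump_continuous : Continuous bump := by unfold bump; fun_prop

lemma bump_nonneg (z : E4) : 0 ≤ bump z := le_max_left _ _

lemma bump_le_one (z : E4) : bump z ≤ 1 := by
  unfold bump
  exact max_le zero_le_one (by nlinarith [sq_nonneg ‖z‖])

lemma bump_eq_zero {z : E4} (hz : 1 ≤ ‖z‖) : bump z = 0 :=
  max_eq_left (by nlinarith)

lemma bump_pow_le_one (k : ℕ) (z : E4) : bump z ^ k ≤ 1 :=
  pow_le_one₀ (bump_nonneg z) (bump_le_one z)

lemma bump_pow_hasCompactSupport (k : ℕ) : HasCompactSupport fun z => bump z ^ (k + 1) := by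
  refine HasCompactSupport.intro (isCompact_closedBall (0 : E4) 1) fun z hz => ?_
  have : 1 < ‖z‖ := by simpa using hz
  rw [bump_eq_zero this.le]; simp

lemma integrable_mul_bump {g : E4 → ℝ} (hg : Continuous g) (k : ℕ) :
    Integrable fun z => g z * bump z ^ (k + 1) :=
  (hg.mul (bump_continuous.pow _)).integrable_of_hasCompactSupport
    ((bump_pow_hasCompactSupport k).mul_left)

/-- Powers at least `2` of the positive part are differentiable, including at the kink. -/
lemma hasDerivAt_posPart_pow (n : ℕ) (t : ℝ) :
    HasDerivAt (fun t : ℝ => (max 0 t) ^ (n + 2)) ((n + 2) * (max 0 t) ^ (n + 1)) t := by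
  rcases lt_trichotomy t 0 with h | h | h
  · rw [max_eq_left h.le]
    have : (fun t : ℝ => (max 0 t) ^ (n + 2)) =ᶠ[𝓝 t] fun _ => 0 := by
      filter_upwards [eventually_lt_nhds h] with s hs
      rw [max_eq_left hs.le]; simp
    simpa using (hasDerivAt_const t (0 : ℝ)).congr_of_eventuallyEq this
  · subst h
    rw [hasDerivAt_iff_isLittleO]
    simp only [max_self, ne_eq, Nat.add_eq_zero_iff, OfNat.ofNat_ne_zero, and_false,
      not_false_eq_true, zero_pow, sub_zero, one_ne_zero, mul_zero, smul_zero]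
    have h1 : (fun t : ℝ => (max 0 t) ^ (n + 2)) =O[𝓝 0] fun t : ℝ => t ^ (n + 2) := by
      refine Asymptotics.IsBigO.of_bound 1 (Eventually.of_forall fun s => ?_)
      rw [one_mul, norm_pow, norm_pow]
      refine pow_le_pow_left₀ (norm_nonneg _) ?_ _
      rw [Real.norm_eq_abs, abs_of_nonneg (le_max_left _ _), Real.norm_eq_abs]
      exact max_le (abs_nonneg _) (le_abs_self _)
    exact h1.trans_isLittleO (by
      simpa using Asymptotics.isLittleO_pow_id (𝕜 := ℝ) (n := n + 2) (by omega))
  · rw [max_eq_right h.le]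
    have : (fun t : ℝ => (max 0 t) ^ (n + 2)) =ᶠ[𝓝 t] fun t => t ^ (n + 2) := by
      filter_upwards [eventually_gt_nhds h] with s hs
      rw [max_eq_right hs.le]
    have h2 := (hasDerivAt_pow (n + 2) t).congr_of_eventuallyEq this
    push_cast at h2
    exact h2

lemma hasFDerivAt_bump_pow (n : ℕ) (z : E4) :
    HasFDerivAt (fun z => bump z ^ (n + 2))
      ((-(2 * (n + 2) * bump z ^ (n + 1))) • innerSL ℝ z) z := by
  have h1 : HasFDerivAt (fun z : E4 => 1 - ‖z‖ ^ 2) (-(2 • innerSL ℝ z)) z :=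
    (hasStrictFDerivAt_norm_sq z).hasFDerivAt.const_sub 1
  have h2 := (hasDerivAt_posPart_pow n (1 - ‖z‖ ^ 2)).comp_hasFDerivAt z h1
  convert! h2 using 1
  ext w
  simp [bump]
  ring

lemma inner_single (z : E4) (i : Fin 4) :
    innerSL ℝ z (EuclideanSpace.single i 1) = z i := by
  simp [EuclideanSpace.inner_single_right]

lemma fderiv_bump_pow (n : ℕ) (z : E4) (i : Fin 4) :
    fderiv ℝ (fun z => bump z ^ (n + 2)) z (EuclideanSpace.single i 1) =
      -(2 * (n + 2)) * (z i * bump z ^ (n + 1)) := by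
  rw [(hasFDerivAt_bump_pow n z).fderiv, smul_apply, inner_single]
  simp only [smul_eq_mul]; ring

/-- The weighted mean `∫ g(x + r z) (1 - |z|²)₊^k dz` of `g` over the ball of centre `x` and radius
`r`. It is not normalised: the weight has total mass `∫ (1 - |z|²)₊^k` rather than `1`. -/
def wmean (k : ℕ) (g : E4 → ℝ) (x : E4) (r : ℝ) : ℝ := ∫ z, g (x + r • z) * bump z ^ k

lemma wmean_zero (k : ℕ) (g : E4 → ℝ) (x : E4) :
    wmean k g x 0 = g x * ∫ z, bump z ^ k := by
  simp [wmean, integral_const_mul]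

lemma wmean_continuous {g : E4 → ℝ} (hg : Continuous g) (k : ℕ) (x : E4) :
    Continuous (wmean (k + 1) g x) := by
  have h : ∀ r, wmean (k + 1) g x r =
      ∫ z in Metric.closedBall (0 : E4) 1, g (x + r • z) * bump z ^ (k + 1) := by
    intro r
    refine (setIntegral_eq_integral_of_forall_compl_eq_zero fun z hz => ?_).symm
    have : 1 < ‖z‖ := by simpa using hz
    rw [bump_eq_zero this.le]; simp
  rw [funext h]
  have hb := bump_continuous
  exact continuous_parametric_integral_of_continuous
    (f := fun (r : ℝ) (z : E4) => g (x + r • z) * bump z ^ (k + 1))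
    (by unfold Function.uncurry; fun_prop) (isCompact_closedBall _ _)

lemma sum_coord (L : E4 →L[ℝ] ℝ) (z : E4) :
    L z = ∑ i, z i * L (EuclideanSpace.single i 1) := by
  have : z = ∑ i, z i • EuclideanSpace.single i (1 : ℝ) := by
    ext j; simp [Pi.single_apply]
  conv_lhs => rw [this]
  simp

/-- Radial derivative of a weighted mean: the weight `-2(k+2) z (1-|z|²)₊^(k+1)` is the gradient of
`(1-|z|²)₊^(k+2)`, so that integrating by parts turns the radial derivative into a mean of the
Laplacian. -/
lemma hasDerivAt_wmean {g : E4 → ℝ} (hg : ContDiff ℝ 2 g) (k : ℕ) (x : E4) (r : ℝ) :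
    HasDerivAt (wmean (k + 1) g x) (r / (2 * (k + 2)) * wmean (k + 2) (lap4 g) x r) r := by
  have hg1 : ContDiff ℝ 1 (fderiv ℝ g) := hg.fderiv_right (by norm_num)
  have hc1 : Continuous (fderiv ℝ g) := hg1.continuous
  have hc : Continuous g := hg.continuous
  have hb := bump_continuous
  have hgd : Differentiable ℝ g := hg.differentiable (by norm_num)
  have hline : ∀ (z : E4) (s : ℝ), HasDerivAt (fun s : ℝ => x + s • z) z s := by
    intro z s
    simpa using ((hasDerivAt_id s).smul_const z).const_add x
  have hder : ∀ (z : E4) (s : ℝ), HasDerivAt (fun s : ℝ => g (x + s • z) * bump z ^ (k + 1))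
      (fderiv ℝ g (x + s • z) z * bump z ^ (k + 1)) s := by
    intro z s
    exact ((hgd _).hasFDerivAt.comp_hasDerivAt s (hline z s)).mul_const _
  -- a bound for the gradient on the compact set swept by the means of radius near `r`
  obtain ⟨B, hB⟩ : ∃ B, ∀ q ∈ Metric.closedBall r 1 ×ˢ Metric.closedBall (0 : E4) 1,
      ‖fderiv ℝ g (x + q.1 • q.2) q.2 * bump q.2 ^ (k + 1)‖ ≤ B := by
    refine ((isCompact_closedBall r 1).prod (isCompact_closedBall (0 : E4) 1)).exists_bound_of_continuousOn
      (Continuous.continuousOn ?_)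
    have : Continuous fun q : ℝ × E4 => fderiv ℝ g (x + q.1 • q.2) q.2 :=
      (hc1.comp (by fun_prop)).clm_apply continuous_snd
    fun_prop
  have key := (hasDerivAt_integral_of_dominated_loc_of_deriv_le (μ := (volume : Measure E4))
    (F := fun s z => g (x + s • z) * bump z ^ (k + 1))
    (F' := fun s z => fderiv ℝ g (x + s • z) z * bump z ^ (k + 1)) (x₀ := r)
    (s := Metric.closedBall r 1)
    (bound := (Metric.closedBall (0 : E4) 1).indicator fun _ => B)
    (Metric.closedBall_mem_nhds r one_pos)
    (Eventually.of_forall fun s => by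
      apply Continuous.aestronglyMeasurable; fun_prop)
    (integrable_mul_bump (by fun_prop) k)
    (by
      apply Continuous.aestronglyMeasurable
      have : Continuous fun z : E4 => fderiv ℝ g (x + r • z) z :=
        (hc1.comp (by fun_prop)).clm_apply continuous_id
      fun_prop)
    (Eventually.of_forall fun z s hs => by
      by_cases hz : z ∈ Metric.closedBall (0 : E4) 1
      · rw [Set.indicator_of_mem hz]
        exact hB (s, z) ⟨hs, hz⟩
      · rw [Set.indicator_of_notMem hz]
        have : 1 < ‖z‖ := by simpa using hz
        rw [bump_eq_zero this.le]; simp)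
    ((integrable_indicator_iff Metric.isClosed_closedBall.measurableSet).2
      (integrableOn_const (isCompact_closedBall (0 : E4) 1).measure_lt_top.ne))
    (Eventually.of_forall fun z s _ => hder z s)).2
  have hval : (∫ z, fderiv ℝ g (x + r • z) z * bump z ^ (k + 1)) =
      r / (2 * (k + 2)) * wmean (k + 2) (lap4 g) x r := by
    -- the `i`-th partial derivative along the rescaling
    set D : Fin 4 → E4 → ℝ := fun i y => fderiv ℝ g y (EuclideanSpace.single i 1) with hD
    have hDc : ∀ i, ContDiff ℝ 1 (D i) := fun i => hg1.clm_apply contDiff_const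
    have hDd : ∀ i z, HasFDerivAt (fun z : E4 => D i (x + r • z))
        (r • fderiv ℝ (D i) (x + r • z)) z := by
      intro i z
      have h1 : HasFDerivAt (fun z : E4 => x + r • z) (r • ContinuousLinearMap.id ℝ E4) z :=
        ((hasFDerivAt_id z).const_smul r).const_add x
      have h2 := (((hDc i).differentiable (by norm_num)) (x + r • z)).hasFDerivAt.comp z h1
      convert! h2 using 1
      ext w; simp
    have hDc2 : ∀ i, Continuous fun z : E4 =>
        fderiv ℝ (D i) (x + r • z) (EuclideanSpace.single i 1) := by
      intro i
      have := (hDc i).continuous_fderiv (by norm_num)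
      fun_prop
    have hDc3 : ∀ i, Continuous fun z : E4 => D i (x + r • z) := fun i =>
      (hDc i).continuous.comp (by fun_prop)
    have hparts : ∀ i, (∫ z : E4, D i (x + r • z) * (z i * bump z ^ (k + 1))) =
        r / (2 * (k + 2)) * ∫ z, fderiv ℝ (D i) (x + r • z) (EuclideanSpace.single i 1) *
          bump z ^ (k + 2) := by
      intro i
      have h := integral_mul_fderiv_eq_neg_fderiv_mul_of_integrable (μ := (volume : Measure E4))
        (f := fun z => D i (x + r • z)) (g := fun z => bump z ^ (k + 2))
        (v := EuclideanSpace.single i 1)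
        (by
          simp only [(hDd i _).fderiv, smul_apply]
          exact integrable_mul_bump ((hDc2 i).const_smul r) (k + 1))
        (by
          simp only [fderiv_bump_pow]
          have := integrable_mul_bump (g := fun z => D i (x + r • z) * (-(2 * (k + 2)) * z i))
            ((hDc3 i).mul (by fun_prop)) k
          refine this.congr (Eventually.of_forall fun z => ?_)
          simp only; ring)
        (integrable_mul_bump (hDc3 i) (k + 1))
        (fun z _ => (hDd i z).differentiableAt)
        (fun z _ => (hasFDerivAt_bump_pow k z).differentiableAt)
      simp only [(hDd i _).fderiv, smul_apply, fderiv_bump_pow,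
        smul_eq_mul] at h
      have e1 : ∀ z : E4, D i (x + r • z) * (-(2 * ((k : ℝ) + 2)) * (z i * bump z ^ (k + 1))) =
        -(2 * ((k : ℝ) + 2)) * (D i (x + r • z) * (z i * bump z ^ (k + 1))) := fun z => by ring
      have e2 : ∀ z : E4, r * (fderiv ℝ (D i) (x + r • z)) (EuclideanSpace.single i 1) *
          bump z ^ (k + 2) = r * ((fderiv ℝ (D i) (x + r • z)) (EuclideanSpace.single i 1) *
          bump z ^ (k + 2)) := fun z => by ring
      simp only [e1, e2, integral_const_mul] at h
      have hk : (0 : ℝ) < 2 * (k + 2) := by positivity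
      rw [div_mul_eq_mul_div, eq_div_iff hk.ne']
      linarith
    have hsum : ∀ z : E4, fderiv ℝ g (x + r • z) z * bump z ^ (k + 1) =
        ∑ i, D i (x + r • z) * (z i * bump z ^ (k + 1)) := by
      intro z
      rw [sum_coord (fderiv ℝ g (x + r • z)) z, Finset.sum_mul]
      refine Finset.sum_congr rfl fun i _ => ?_
      simp only [hD]; ring
    simp only [hsum]
    rw [integral_finsetSum]
    · simp only [hparts, wmean, lap4, Finset.sum_mul]
      rw [integral_finsetSum, Finset.mul_sum]
      intro i _
      exact integrable_mul_bump (hDc2 i) (k + 1)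
    · intro i _
      have := integrable_mul_bump (g := fun z => D i (x + r • z) * z i)
            ((hDc3 i).mul (by fun_prop)) k
      refine this.congr (Eventually.of_forall fun z => ?_)
      simp only; ring
  rw [← hval]
  exact key

/-- The case `k = 2` of the normalisation `∫ (1-|z|²)₊^k`, computed in polar coordinates. -/
lemma integral_bump_sq : ∫ z, bump z ^ 2 = Real.pi ^ 2 / 12 := by
  have h := integral_fun_norm_addHaar (volume : Measure E4) (fun t : ℝ => (max 0 (1 - t ^ 2)) ^ 2)
  have hv : (volume : Measure E4).real (Metric.ball 0 1) = Real.pi ^ 2 / 2 := by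
    rw [measureReal_def, InnerProductSpace.volume_ball_of_dim_even (k := 2) (by simp)]
    simp
    positivity
  have hI : ∫ t in Set.Ioi (0 : ℝ), t ^ 3 * (max 0 (1 - t ^ 2)) ^ 2 = 1 / 24 := by
    have h1 : ∫ t in Set.Ioi (0 : ℝ), t ^ 3 * (max 0 (1 - t ^ 2)) ^ 2 =
        ∫ t in Set.Ioc (0 : ℝ) 1, t ^ 3 * (1 - t ^ 2) ^ 2 := by
      rw [setIntegral_eq_of_subset_of_forall_sdiff_eq_zero measurableSet_Ioi
        (Set.Ioc_subset_Ioi_self : Set.Ioc (0 : ℝ) 1 ⊆ _)]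
      · refine setIntegral_congr_fun measurableSet_Ioc fun t ht => ?_
        have : 0 ≤ 1 - t ^ 2 := by nlinarith [ht.1, ht.2]
        simp only [max_eq_right this]
      · intro t ht
        have : 1 < t := by
          by_contra hh
          exact ht.2 ⟨ht.1, not_lt.1 hh⟩
        rw [max_eq_left (by nlinarith)]; simp
    rw [h1, ← intervalIntegral.integral_of_le zero_le_one]
    have h2 : ∀ t : ℝ, t ^ 3 * (1 - t ^ 2) ^ 2 = t ^ 3 - 2 * t ^ 5 + t ^ 7 := fun t => by ring
    simp only [h2]
    rw [intervalIntegral.integral_add, intervalIntegral.integral_sub] <;>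
      first
      | (apply Continuous.intervalIntegrable; fun_prop)
      | skip
    simp only [intervalIntegral.integral_const_mul, integral_pow]
    norm_num
  simp only [finrank_euclideanSpace, Fintype.card_fin, smul_eq_mul, hv, nsmul_eq_mul] at h
  unfold bump
  rw [h, show (4 - 1 : ℕ) = 3 from rfl, hI]
  push_cast
  ring

/-- The normalisation for `k = 1`, of which only the sign matters. -/
lemma integral_bump_pos : 0 < ∫ z, bump z ^ 1 := by
  have hi := integrable_mul_bump (g := fun _ => 1) continuous_const 0
  simp only [one_mul, zero_add] at hi
  refine (bump_continuous.pow 1).integral_pos_of_hasCompactSupport_nonneg_nonzero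
    (bump_pow_hasCompactSupport 0) (fun z => pow_nonneg (bump_nonneg z) _) (x := 0) ?_
  simp [bump]

/-! ### Large-scale means and the Riesz potential -/

/-- Local integrability of the powers `|z|^a`, `a > -4`, on `ℝ⁴`. -/
lemma integrable_near {a : ℝ} (ha : -4 < a) {ρ : ℝ} (hρ : 0 < ρ) :
    Integrable fun z : E4 => if ‖z‖ < ρ then ‖z‖ ^ a else 0 := by
  have h := integrable_fun_norm_addHaar (volume : Measure E4)
    (f := fun t : ℝ => if t < ρ then t ^ a else 0)
  refine h.2 ?_
  simp only [finrank_euclideanSpace, Fintype.card_fin, smul_eq_mul]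
  have h1 : IntegrableOn (fun t : ℝ => t ^ (3 + a)) (Set.Ioo 0 ρ) :=
    (intervalIntegral.integrableOn_Ioo_rpow_iff hρ).2 (by linarith)
  have h2 := h1.integrable_indicator measurableSet_Ioo
  refine (h2.integrableOn (s := Set.Ioi 0)).congr_fun (fun t ht => ?_) measurableSet_Ioi
  have ht' : (0 : ℝ) < t := ht
  by_cases h : t < ρ
  · simp only [Set.indicator_of_mem (show t ∈ Set.Ioo 0 ρ from ⟨ht', h⟩), h, if_true]
    rw [Real.rpow_add ht']
    norm_num
  · rw [Set.indicator_of_notMem (fun h' => h h'.2)]; simp [h]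

/-- The kernel `|z|⁻⁵` of the half-Laplacian, truncated away from the diagonal. -/
def tker (ε : ℝ) (z : E4) : ℝ := if ε ≤ ‖z‖ then (‖z‖ ^ 5)⁻¹ else 0

lemma tker_integrable {ε : ℝ} (hε : 0 < ε) : Integrable (tker ε) := by
  have h := integrable_fun_norm_addHaar (volume : Measure E4)
    (f := fun t : ℝ => if ε ≤ t then (t ^ 5)⁻¹ else 0)
  refine h.2 ?_
  simp only [finrank_euclideanSpace, Fintype.card_fin, smul_eq_mul]
  have h1 : IntegrableOn (fun t : ℝ => t ^ (-2 : ℝ)) (Set.Ici ε) :=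
    (integrableOn_Ici_iff_integrableOn_Ioi).2
      (integrableOn_Ioi_rpow_of_lt (by norm_num) hε)
  have h2 := h1.integrable_indicator measurableSet_Ici
  refine (h2.integrableOn (s := Set.Ioi 0)).congr_fun (fun t ht => ?_) measurableSet_Ioi
  have ht' : (0 : ℝ) < t := ht
  by_cases h : ε ≤ t
  · simp only [Set.indicator_of_mem (show t ∈ Set.Ici ε from h), h, if_true]
    rw [Real.rpow_neg ht'.le]
    norm_num
    field_simp
  · rw [Set.indicator_of_notMem (show t ∉ Set.Ici ε from h)]; simp [h]

lemma integrable_riesz {P : E4 → ℝ} (hPc : Continuous P) (hP0 : ∀ y, 0 ≤ P y)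
    (hPi : Integrable P) (x : E4) : Integrable fun y => P (x + y) / ‖y‖ ^ 2 := by
  obtain ⟨B, hB⟩ := (isCompact_closedBall x 1).exists_bound_of_continuousOn hPc.continuousOn
  have h1 := ((integrable_near (a := -2) (by norm_num) one_pos).const_mul B).add
    (hPi.comp_add_left x)
  refine h1.mono' (by
    apply Measurable.aestronglyMeasurable
    have := hPc.measurable
    fun_prop) (Eventually.of_forall fun y => ?_)
  rw [Real.norm_of_nonneg (div_nonneg (hP0 _) (sq_nonneg _))]
  simp only [Pi.add_apply]
  have hp := hP0 (x + y)
  by_cases hy : ‖y‖ < 1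
  · have hb := hB (x + y) (by simpa using hy.le)
    rw [Real.norm_of_nonneg hp] at hb
    rw [if_pos hy, Real.rpow_neg (norm_nonneg _), div_eq_mul_inv]
    norm_num
    have : P (x + y) * (‖y‖ ^ 2)⁻¹ ≤ B * (‖y‖ ^ 2)⁻¹ := by gcongr
    linarith
  · rw [if_neg hy]
    have : P (x + y) / ‖y‖ ^ 2 ≤ P (x + y) := by
      apply div_le_self hp
      nlinarith
    linarith

/-- `r ↦ (1 - s²/r²)₊⁴ / (8 s²)` is a primitive of `r ↦ r⁻³ (1 - s²/r²)₊³`, at `r = 0` as well,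
where both functions take the value `0 / 0 = 0` and vanish nearby. -/
lemma hasDerivAt_profile {s : ℝ} (hs : 0 < s) (r : ℝ) :
    HasDerivAt (fun r : ℝ => (max 0 (r ^ 2 - s ^ 2)) ^ 4 / (r ^ 8 * (8 * s ^ 2)))
      ((max 0 (r ^ 2 - s ^ 2)) ^ 3 / r ^ 9) r := by
  by_cases hr : r = 0
  · subst hr
    have : (fun r : ℝ => (max 0 (r ^ 2 - s ^ 2)) ^ 4 / (r ^ 8 * (8 * s ^ 2))) =ᶠ[𝓝 0]
        fun _ => 0 := by
      have : ∀ᶠ r : ℝ in 𝓝 0, r ^ 2 < s ^ 2 := by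
        have hc : Continuous fun r : ℝ => r ^ 2 := by fun_prop
        exact hc.continuousAt.eventually_lt continuousAt_const (by simpa using pow_pos hs 2)
      filter_upwards [this] with r hr
      rw [max_eq_left (by linarith)]; simp
    simpa using (hasDerivAt_const (0 : ℝ) (0 : ℝ)).congr_of_eventuallyEq this
  · have h1 : HasDerivAt (fun r : ℝ => r ^ 2 - s ^ 2) (2 * r) r := by
      simpa using (hasDerivAt_pow 2 r).sub_const (s ^ 2)
    have h2 := (hasDerivAt_posPart_pow 2 (r ^ 2 - s ^ 2)).comp r h1
    have h3 : HasDerivAt (fun r : ℝ => r ^ 8 * (8 * s ^ 2)) (8 * r ^ 7 * (8 * s ^ 2)) r := by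
      simpa using (hasDerivAt_pow 8 r).mul_const (8 * s ^ 2)
    have h4 := h2.div h3 (by positivity)
    refine h4.congr_deriv ?_
    simp only [Function.comp_apply]
    push_cast
    rcases le_total (r ^ 2 - s ^ 2) 0 with h | h
    · rw [max_eq_left h]; simp
    · rw [max_eq_right h]
      field_simp
      ring

lemma wmean_rescale (k : ℕ) (P : E4 → ℝ) (x : E4) {r : ℝ} (hr : 0 < r) :
    wmean k P x r =
      ∫ y, P (x + y) * ((max 0 (r ^ 2 - ‖y‖ ^ 2)) ^ k / (r ^ 2) ^ k) / r ^ 4 := by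
  have h := Measure.integral_comp_smul (volume : Measure E4)
    (fun y => P (x + y) * ((max 0 (r ^ 2 - ‖y‖ ^ 2)) ^ k / (r ^ 2) ^ k)) r
  have e : ∀ z : E4, P (x + r • z) * ((max 0 (r ^ 2 - ‖r • z‖ ^ 2)) ^ k / (r ^ 2) ^ k) =
      P (x + r • z) * bump z ^ k := by
    intro z
    congr 1
    rw [← div_pow, norm_smul, Real.norm_of_nonneg hr.le, mul_pow]
    congr 1
    unfold bump
    rw [show r ^ 2 - r ^ 2 * ‖z‖ ^ 2 = r ^ 2 * (1 - ‖z‖ ^ 2) by ring,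
      ← mul_zero (r ^ 2), ← mul_max_of_nonneg _ _ (sq_nonneg r), mul_zero]
    field_simp
  simp only [e] at h
  rw [wmean, h, integral_div]
  simp only [finrank_euclideanSpace, Fintype.card_fin, smul_eq_mul]
  rw [abs_of_pos (by positivity)]
  field_simp

lemma posPart_ratio_le {R : ℝ} (hR : 0 < R) (s : ℝ) :
    (max 0 (R ^ 2 - s ^ 2)) ^ 4 / R ^ 8 ≤ 1 := by
  rw [div_le_one (by positivity), show R ^ 8 = (R ^ 2) ^ 4 by ring]
  refine pow_le_pow_left₀ (le_max_left _ _) (max_le (sq_nonneg _) ?_) _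
  nlinarith [sq_nonneg s]

/-- Integrating the radial derivative of `wmean 2 f x` from `0` to `R` and exchanging the order of
integration expresses the mean of `f` through a truncated Riesz potential of `Δf`. -/
lemma wmean_repr {f : E4 → ℝ} (hf : ContDiff ℝ 2 f) (hPc : Continuous (lap4 f))
    (hP0 : ∀ y, 0 ≤ lap4 f y) (hPi : Integrable (lap4 f)) (x : E4) {R : ℝ} (hR : 0 < R) :
    wmean 2 f x R = Real.pi ^ 2 / 12 * f x + 1 / 48 * ∫ y, lap4 f (x + y) / ‖y‖ ^ 2 *
      ((max 0 (R ^ 2 - ‖y‖ ^ 2)) ^ 4 / R ^ 8) := by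
  set P := lap4 f with hP
  have hftc := intervalIntegral.integral_eq_sub_of_hasDerivAt
    (fun r _ => hasDerivAt_wmean hf 1 x r) (a := 0) (b := R)
    ((Continuous.mul (by fun_prop) (wmean_continuous hPc 2 x)).intervalIntegrable _ _)
  rw [show 1 + 1 = 2 from rfl, wmean_zero, integral_bump_sq] at hftc
  -- for fixed `y ≠ 0`, the radial integral of the kernel
  have hii : ∀ y : E4, y ≠ 0 → IntervalIntegrable
      (fun r : ℝ => (max 0 (r ^ 2 - ‖y‖ ^ 2)) ^ 3 / r ^ 9) volume 0 R := by
    intro y hy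
    refine intervalIntegral.intervalIntegrable_deriv_of_nonneg
      (HasDerivAt.continuousOn fun r _ => hasDerivAt_profile (norm_pos_iff.2 hy) r)
      (fun r _ => hasDerivAt_profile (norm_pos_iff.2 hy) r) fun r hr => ?_
    have : 0 < r := by
      rw [min_eq_left hR.le] at hr; exact hr.1
    positivity
  have hiv : ∀ y : E4, y ≠ 0 → ∫ r in (0 : ℝ)..R, (max 0 (r ^ 2 - ‖y‖ ^ 2)) ^ 3 / r ^ 9 =
      (max 0 (R ^ 2 - ‖y‖ ^ 2)) ^ 4 / (R ^ 8 * (8 * ‖y‖ ^ 2)) := by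
    intro y hy
    rw [intervalIntegral.integral_eq_sub_of_hasDerivAt
      (fun r _ => hasDerivAt_profile (norm_pos_iff.2 hy) r) (hii y hy)]
    simp
  have hne : ∀ᵐ y : E4, y ≠ 0 := by
    simp [ae_iff]
  have hPm : Measurable P := hPc.measurable
  have hInt : Integrable (Function.uncurry fun (r : ℝ) (y : E4) =>
      P (x + y) * ((max 0 (r ^ 2 - ‖y‖ ^ 2)) ^ 3 / r ^ 9))
      ((volume.restrict (Set.uIoc 0 R)).prod volume) := by
    rw [integrable_prod_iff' (by
      apply Measurable.aestronglyMeasurable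
      unfold Function.uncurry
      fun_prop)]
    constructor
    · filter_upwards [hne] with y hy
      exact ((hii y hy).def'.const_mul (P (x + y)))
    · refine ((integrable_riesz hPc hP0 hPi x).div_const 8).mono' ?_ ?_
      · apply AEStronglyMeasurable.integral_prod_right'
          (f := fun q : E4 × ℝ => ‖Function.uncurry (fun (r : ℝ) (y : E4) =>
            P (x + y) * ((max 0 (r ^ 2 - ‖y‖ ^ 2)) ^ 3 / r ^ 9)) (q.2, q.1)‖)
        apply Measurable.aestronglyMeasurable
        unfold Function.uncurry
        fun_prop
      · filter_upwards [hne] with y hy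
        have e : ∀ r ∈ Set.uIoc 0 R, ‖P (x + y) * ((max 0 (r ^ 2 - ‖y‖ ^ 2)) ^ 3 / r ^ 9)‖ =
            P (x + y) * ((max 0 (r ^ 2 - ‖y‖ ^ 2)) ^ 3 / r ^ 9) := by
          intro r hr
          rw [Set.uIoc_of_le hR.le] at hr
          have := hr.1
          exact Real.norm_of_nonneg (mul_nonneg (hP0 _) (by positivity))
        simp only [Function.uncurry]
        rw [setIntegral_congr_fun measurableSet_uIoc e, integral_const_mul,
          Set.uIoc_of_le hR.le, ← intervalIntegral.integral_of_le hR.le, hiv y hy,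
          Real.norm_of_nonneg (mul_nonneg (hP0 _) (by positivity)), div_div]
        have hy' := norm_pos_iff.2 hy
        rw [← div_div, div_eq_mul_inv (P _)]
        refine mul_le_mul_of_nonneg_left ?_ (hP0 _)
        rw [← div_div, ← one_div, div_div _ (8 : ℝ), mul_comm (_ ^ 2) (8 : ℝ)]
        gcongr
        exact posPart_ratio_le hR _
  have hswap := intervalIntegral_integral_swap hInt
  have e1 : ∫ r in (0 : ℝ)..R, r / (2 * (((1 : ℕ) : ℝ) + 2)) * wmean (1 + 2) P x r =
      1 / 6 * ∫ r in (0 : ℝ)..R, ∫ y, P (x + y) * ((max 0 (r ^ 2 - ‖y‖ ^ 2)) ^ 3 / r ^ 9) := by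
    rw [← intervalIntegral.integral_const_mul]
    refine intervalIntegral.integral_congr_ae (Eventually.of_forall fun r hr => ?_)
    rw [Set.uIoc_of_le hR.le] at hr
    have hr0 := hr.1
    rw [wmean_rescale _ _ _ hr.1, ← integral_const_mul, ← integral_const_mul]
    refine integral_congr_ae (Eventually.of_forall fun y => ?_)
    simp only
    push_cast
    field_simp
    ring
  rw [e1, hswap] at hftc
  have e2 : ∫ y, ∫ r in (0 : ℝ)..R, P (x + y) * ((max 0 (r ^ 2 - ‖y‖ ^ 2)) ^ 3 / r ^ 9) =
      1 / 8 * ∫ y, P (x + y) / ‖y‖ ^ 2 * ((max 0 (R ^ 2 - ‖y‖ ^ 2)) ^ 4 / R ^ 8) := by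
    rw [← integral_const_mul]
    refine integral_congr_ae ?_
    filter_upwards [hne] with y hy
    rw [intervalIntegral.integral_const_mul, hiv y hy]
    have hy' := norm_pos_iff.2 hy
    field_simp
  rw [e2] at hftc
  linarith

/-- Up to the mass `π² / 12` of the weight, means of `f` over large balls converge to `f` plus the
Riesz potential of `Δf`, that is, to the harmonic part of `f`. -/
lemma tendsto_wmean {f : E4 → ℝ} (hf : ContDiff ℝ 2 f) (hPc : Continuous (lap4 f))
    (hP0 : ∀ y, 0 ≤ lap4 f y) (hPi : Integrable (lap4 f)) (x : E4) :
    Tendsto (wmean 2 f x) atTop (𝓝 (Real.pi ^ 2 / 12 *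
      (f x + 1 / (4 * Real.pi ^ 2) * ∫ y, lap4 f y / ‖x - y‖ ^ 2))) := by
  have e0 : ∫ y, lap4 f y / ‖x - y‖ ^ 2 = ∫ y, lap4 f (x + y) / ‖y‖ ^ 2 := by
    rw [← integral_add_left_eq_self (μ := (volume : Measure E4)) _ x]
    simp
  have h := tendsto_integral_filter_of_dominated_convergence (μ := (volume : Measure E4))
    (l := (atTop : Filter ℝ))
    (F := fun R y => lap4 f (x + y) / ‖y‖ ^ 2 * ((max 0 (R ^ 2 - ‖y‖ ^ 2)) ^ 4 / R ^ 8))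
    (f := fun y => lap4 f (x + y) / ‖y‖ ^ 2) (fun y => lap4 f (x + y) / ‖y‖ ^ 2)
    (Eventually.of_forall fun R => by
      apply Measurable.aestronglyMeasurable
      have := hPc.measurable
      fun_prop)
    (by
      filter_upwards [eventually_gt_atTop 0] with R hR
      refine Eventually.of_forall fun y => ?_
      have h0 : 0 ≤ lap4 f (x + y) / ‖y‖ ^ 2 := div_nonneg (hP0 _) (sq_nonneg _)
      rw [Real.norm_of_nonneg (mul_nonneg h0 (by positivity))]
      exact mul_le_of_le_one_right h0 (posPart_ratio_le hR _))
    (integrable_riesz hPc hP0 hPi x)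
    (Eventually.of_forall fun y => by
      have h1 : Tendsto (fun R : ℝ => (1 - ‖y‖ ^ 2 / R ^ 2) ^ 4) atTop (𝓝 1) := by
        have h2 : Tendsto (fun R : ℝ => ‖y‖ ^ 2 / R ^ 2) atTop (𝓝 0) :=
          tendsto_const_nhds.div_atTop (tendsto_pow_atTop (by norm_num))
        simpa using (h2.const_sub 1).pow 4
      have h3 : Tendsto (fun R : ℝ => (max 0 (R ^ 2 - ‖y‖ ^ 2)) ^ 4 / R ^ 8) atTop (𝓝 1) := by
        refine h1.congr' ?_
        filter_upwards [eventually_gt_atTop ‖y‖] with R hR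
        have hR0 : 0 < R := (norm_nonneg y).trans_lt hR
        rw [max_eq_right (by nlinarith [norm_nonneg y])]
        field_simp
      simpa using h3.const_mul (lap4 f (x + y) / ‖y‖ ^ 2))
  rw [e0]
  have h4 := (h.const_mul (1 / 48)).const_add (Real.pi ^ 2 / 12 * f x)
  have hpi := Real.pi_pos
  convert! h4.congr' ?_ using 2
  · field_simp
    ring
  · filter_upwards [eventually_gt_atTop 0] with R hR
    rw [wmean_repr hf hPc hP0 hPi x hR]

/-! ### The truncated half-Laplacian and its action on the test function -/

lemma tker_nonneg (ε : ℝ) (z : E4) : 0 ≤ tker ε z := by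
  unfold tker; split_ifs <;> positivity

lemma tker_neg (ε : ℝ) (z : E4) : tker ε (-z) = tker ε z := by simp [tker]

lemma tker_measurable (ε : ℝ) : Measurable (tker ε) := by
  unfold tker
  exact Measurable.ite (measurableSet_le measurable_const measurable_norm) (by fun_prop)
    measurable_const

/-- The truncated half-Laplacian, without the normalising constant. -/
def Lop (ε : ℝ) (w : E4 → ℝ) (x : E4) : ℝ := ∫ z, tker ε z * (w x - w (x + z))

lemma setIntegral_eq_Lop (ε : ℝ) (w : E4 → ℝ) (x : E4) :
    ∫ y in {y : E4 | ε ≤ ‖y - x‖}, (w x - w y) / ‖x - y‖ ^ 5 = Lop ε w x := by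
  have hm : MeasurableSet {y : E4 | ε ≤ ‖y - x‖} :=
    measurableSet_le measurable_const (by fun_prop)
  rw [← integral_indicator hm, ← integral_add_left_eq_self (μ := (volume : Measure E4)) _ x, Lop]
  refine integral_congr_ae (Eventually.of_forall fun z => ?_)
  by_cases h : ε ≤ ‖z‖
  · simp [Set.indicator, tker, h, div_eq_inv_mul]
  · simp [Set.indicator, tker, h]

/-- Away from the diagonal the kernel is comparable with the weight `1 / (1 + |y|⁵)`, uniformly for
base points in a bounded set. -/
lemma tker_le {ε X : ℝ} (hε : 0 < ε) {x : E4} (hx : ‖x‖ ≤ X) (z : E4) :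
    tker ε z ≤ ((1 + X) / ε + 1) ^ 5 * (1 + ‖x + z‖ ^ 5)⁻¹ := by
  have hX : 0 ≤ X := (norm_nonneg x).trans hx
  unfold tker
  split_ifs with h
  · have hz : 0 < ‖z‖ := hε.trans_le h
    rw [← div_eq_mul_inv, le_div_iff₀ (by positivity), inv_mul_le_iff₀ (by positivity),
      ← mul_pow]
    have h1 : 1 + ‖x + z‖ ^ 5 ≤ (1 + ‖x + z‖) ^ 5 := by
      have := norm_nonneg (x + z)
      have : 0 ≤ 5 * ‖x + z‖ + 10 * ‖x + z‖ ^ 2 + 10 * ‖x + z‖ ^ 3 + 5 * ‖x + z‖ ^ 4 := by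
        positivity
      nlinarith
    refine h1.trans (pow_le_pow_left₀ (by positivity) ?_ 5)
    have h2 : 1 + X ≤ ‖z‖ * ((1 + X) / ε) := by
      rw [mul_div_assoc', le_div_iff₀ hε, mul_comm]
      gcongr
    have h3 := norm_add_le x z
    linarith
  · positivity

lemma integrable_tker_mul {w : E4 → ℝ} (hw : Continuous w)
    (hi : Integrable fun x : E4 => |w x| / (1 + ‖x‖ ^ 5)) {ε : ℝ} (hε : 0 < ε) (x : E4) :
    Integrable fun z => tker ε z * w (x + z) := by
  refine ((hi.comp_add_left x).const_mul (((1 + ‖x‖) / ε + 1) ^ 5)).mono' ?_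
    (Eventually.of_forall fun z => ?_)
  · have := tker_measurable ε
    have := hw.measurable
    apply Measurable.aestronglyMeasurable; fun_prop
  · rw [norm_mul, Real.norm_of_nonneg (tker_nonneg _ _), Real.norm_eq_abs,
      div_eq_inv_mul (|w _|), ← mul_assoc]
    exact mul_le_mul_of_nonneg_right (tker_le hε le_rfl z) (abs_nonneg _)

lemma Lop_eq_sub {w : E4 → ℝ} {ε : ℝ} (hε : 0 < ε) {x : E4}
    (hi : Integrable fun z => tker ε z * w (x + z)) :
    Lop ε w x = w x * (∫ z, tker ε z) - ∫ z, tker ε z * w (x + z) := by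
  rw [Lop, ← integral_const_mul, ← integral_sub ((tker_integrable hε).const_mul _) hi]
  refine integral_congr_ae (Eventually.of_forall fun z => ?_)
  simp only; ring

lemma integrable_second_diff {w : E4 → ℝ} {ε : ℝ} (hε : 0 < ε) {x : E4}
    (hi : Integrable fun z => tker ε z * w (x + z)) :
    Integrable fun z => tker ε z * (2 * w x - w (x + z) - w (x - z)) := by
  have h2 : Integrable fun z => tker ε z * w (x - z) := by
    refine hi.comp_neg.congr (Eventually.of_forall fun z => ?_)
    simp only [tker_neg, sub_eq_add_neg]
  refine ((((tker_integrable hε).const_mul (2 * w x)).sub hi).sub h2).congr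
    (Eventually.of_forall fun z => ?_)
  simp only [Pi.sub_apply]; ring

/-- The truncated half-Laplacian as an integral of symmetric second differences. -/
lemma Lop_symm {w : E4 → ℝ} {ε : ℝ} (hε : 0 < ε) {x : E4}
    (hi : Integrable fun z => tker ε z * w (x + z)) :
    Lop ε w x = 1 / 2 * ∫ z, tker ε z * (2 * w x - w (x + z) - w (x - z)) := by
  have h1 : Integrable fun z => tker ε z * (w x - w (x + z)) := by
    refine (((tker_integrable hε).const_mul (w x)).sub hi).congr (Eventually.of_forall fun z => ?_)
    simp only [Pi.sub_apply]; ring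
  have h2 : Integrable fun z => tker ε z * (w x - w (x - z)) := by
    refine h1.comp_neg.congr (Eventually.of_forall fun z => ?_)
    simp only [tker_neg, sub_eq_add_neg]
  have h3 : ∫ z, tker ε z * (w x - w (x - z)) = Lop ε w x := by
    rw [Lop, ← integral_neg_eq_self]
    simp only [tker_neg, sub_neg_eq_add]
  have h4 : ∫ z, tker ε z * (2 * w x - w (x + z) - w (x - z)) = Lop ε w x + Lop ε w x := by
    calc ∫ z, tker ε z * (2 * w x - w (x + z) - w (x - z))
        = ∫ z, (tker ε z * (w x - w (x + z)) + tker ε z * (w x - w (x - z))) := by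
          refine integral_congr_ae (Eventually.of_forall fun z => ?_)
          simp only; ring
      _ = Lop ε w x + Lop ε w x := by rw [integral_add h1 h2, h3, Lop]
  rw [h4]; ring

/-- The test function `x ↦ (R² - |x - c|²)₊`. -/
def parab (c : E4) (R : ℝ) (x : E4) : ℝ := max 0 (R ^ 2 - ‖x - c‖ ^ 2)

lemma parab_continuous (c : E4) (R : ℝ) : Continuous (parab c R) := by
  unfold parab; fun_prop

lemma parab_nonneg (c : E4) (R : ℝ) (x : E4) : 0 ≤ parab c R x := le_max_left _ _

lemma parab_eq_zero {c : E4} {R : ℝ} (hR : 0 ≤ R) {x : E4} (hx : x ∉ Metric.closedBall c R) :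
    parab c R x = 0 := by
  have : R < ‖x - c‖ := by simpa [dist_eq_norm] using hx
  exact max_eq_left (by nlinarith)

lemma parab_hasCompactSupport (c : E4) {R : ℝ} (hR : 0 ≤ R) : HasCompactSupport (parab c R) :=
  HasCompactSupport.intro (isCompact_closedBall c R) fun _ hx => parab_eq_zero hR hx

lemma parab_integrable (c : E4) {R : ℝ} (hR : 0 ≤ R) : Integrable (parab c R) :=
  (parab_continuous c R).integrable_of_hasCompactSupport (parab_hasCompactSupport c hR)

lemma parab_weight_integrable (c : E4) {R : ℝ} (hR : 0 ≤ R) :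
    Integrable fun x : E4 => |parab c R x| / (1 + ‖x‖ ^ 5) := by
  refine (parab_integrable c hR).norm.mono' ?_ (Eventually.of_forall fun x => ?_)
  · have := (parab_continuous c R).measurable
    apply Measurable.aestronglyMeasurable; fun_prop
  · rw [Real.norm_of_nonneg (by positivity), Real.norm_eq_abs]
    exact div_le_self (abs_nonneg _) (by have := pow_nonneg (norm_nonneg x) 5; linarith)

/-- The truncated half-Laplacian is symmetric: it can be moved from `u` onto the test function. -/
lemma Lop_duality {u : E4 → ℝ} (hu : Continuous u)
    (hi : Integrable fun x : E4 => |u x| / (1 + ‖x‖ ^ 5)) {ε : ℝ} (hε : 0 < ε) (c : E4)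
    {R : ℝ} (hR : 0 ≤ R) :
    ∫ x, parab c R x * Lop ε u x = ∫ x, u x * Lop ε (parab c R) x := by
  have hφ := parab_continuous c R
  have hkm := tker_measurable ε
  have hum := hu.measurable
  have hφm := hφ.measurable
  have hprod : Integrable (Function.uncurry fun x y : E4 =>
      parab c R x * (tker ε (y - x) * u y)) (volume.prod volume) := by
    refine (((parab_integrable c hR).mul_prod hi).const_mul
      (((1 + (‖c‖ + R)) / ε + 1) ^ 5)).mono' ?_ (Eventually.of_forall fun q => ?_)
    · apply Measurable.aestronglyMeasurable
      unfold Function.uncurry; fun_prop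
    · obtain ⟨x, y⟩ := q
      simp only [Function.uncurry]
      rw [norm_mul, norm_mul, Real.norm_of_nonneg (parab_nonneg _ _ _),
        Real.norm_of_nonneg (tker_nonneg _ _), Real.norm_eq_abs]
      by_cases hx : x ∈ Metric.closedBall c R
      · have hxn : ‖x‖ ≤ ‖c‖ + R := by
          have h1 : ‖x - c‖ ≤ R := by simpa [dist_eq_norm] using hx
          have h2 := norm_add_le c (x - c)
          rw [add_sub_cancel] at h2
          linarith
        have hk := tker_le hε hxn (y - x)
        rw [add_sub_cancel] at hk
        have := mul_le_mul_of_nonneg_left (mul_le_mul_of_nonneg_right hk (abs_nonneg (u y)))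
          (parab_nonneg c R x)
        refine this.trans (le_of_eq ?_)
        ring
      · rw [parab_eq_zero hR hx]; simp
  have hu1 : Integrable fun x => parab c R x * (u x * ∫ z, tker ε z) := by
    refine Continuous.integrable_of_hasCompactSupport (by fun_prop)
      ((parab_hasCompactSupport c hR).mul_right)
  have hswap := integral_integral_swap hprod
  have hA : ∀ x, ∫ y, parab c R x * (tker ε (y - x) * u y) =
      parab c R x * ∫ z, tker ε z * u (x + z) := by
    intro x
    rw [integral_const_mul, ← integral_add_left_eq_self (μ := (volume : Measure E4)) _ x]
    simp
  have hB : ∀ y, ∫ x, parab c R x * (tker ε (y - x) * u y) =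
      u y * ∫ z, tker ε z * parab c R (y + z) := by
    intro y
    rw [← integral_const_mul, ← integral_add_left_eq_self (μ := (volume : Measure E4)) _ y]
    refine integral_congr_ae (Eventually.of_forall fun z => ?_)
    simp only
    rw [show y - (y + z) = -z by abel, tker_neg]
    ring
  have hl := hprod.integral_prod_left
  have hr := hprod.integral_prod_right
  simp only [Function.uncurry, hA] at hl
  simp only [Function.uncurry, hB] at hr
  simp only [hA, hB] at hswap
  simp only [Lop_eq_sub hε (integrable_tker_mul hu hi hε _),
    Lop_eq_sub hε (integrable_tker_mul hφ (parab_weight_integrable c hR) hε _), mul_sub]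
  rw [integral_sub hu1 hl, integral_sub _ hr, hswap]
  · congr 1
    refine integral_congr_ae (Eventually.of_forall fun z => ?_)
    simp only; ring
  · refine hu1.congr (Eventually.of_forall fun z => ?_)
    simp only; ring

lemma integrable_min_kernel : Integrable fun z : E4 => min (‖z‖ ^ 2) 1 * (‖z‖ ^ 5)⁻¹ := by
  refine ((integrable_near (a := -3) (by norm_num) one_pos).add (tker_integrable one_pos)).mono'
    (by apply Measurable.aestronglyMeasurable; fun_prop) (Eventually.of_forall fun z => ?_)
  rw [Real.norm_of_nonneg (by positivity)]
  simp only [Pi.add_apply, tker]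
  rcases lt_or_ge ‖z‖ 1 with h | h
  · rw [if_pos h, if_neg (not_le.2 h), add_zero, Real.rpow_neg (norm_nonneg _)]
    norm_num
    rcases eq_or_ne ‖z‖ 0 with h0 | h0
    · rw [h0]; simp
    · have : 0 < ‖z‖ := lt_of_le_of_ne (norm_nonneg _) h0.symm
      calc min (‖z‖ ^ 2) 1 * (‖z‖ ^ 5)⁻¹ ≤ ‖z‖ ^ 2 * (‖z‖ ^ 5)⁻¹ := by
            gcongr; exact min_le_left _ _
        _ = (‖z‖ ^ 3)⁻¹ := by field_simp
  · rw [if_neg (not_lt.2 h), if_pos h, zero_add]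
    exact mul_le_of_le_one_left (by positivity) (min_le_right _ _)

/-- One-sided bound for the half-Laplacian of the test function, uniform in the truncation. Second
differences of the concave part `R² - |x - c|²` are explicit, and taking the positive part only
helps. -/
lemma Lop_parab_le {ε : ℝ} (hε : 0 < ε) (c : E4) {R : ℝ} (hR : 1 ≤ R) (x : E4) :
    Lop ε (parab c R) x ≤ (Metric.closedBall c R).indicator
      (fun _ => R ^ 2 * ∫ z : E4, min (‖z‖ ^ 2) 1 * (‖z‖ ^ 5)⁻¹) x := by
  have hR0 : 0 ≤ R := zero_le_one.trans hR
  by_cases hx : x ∈ Metric.closedBall c R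
  · rw [Set.indicator_of_mem hx]
    have hxn : ‖x - c‖ ≤ R := by simpa [dist_eq_norm] using hx
    have hφ : parab c R x = R ^ 2 - ‖x - c‖ ^ 2 :=
      max_eq_right (by nlinarith [norm_nonneg (x - c)])
    rw [Lop_symm hε (integrable_tker_mul (parab_continuous c R)
      (parab_weight_integrable c hR0) hε x), ← integral_const_mul, ← integral_const_mul]
    have hi := integrable_tker_mul (parab_continuous c R)
      (parab_weight_integrable c hR0) hε x
    refine integral_mono ((integrable_second_diff hε hi).const_mul _)
      (integrable_min_kernel.const_mul _) fun z => ?_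
    have h1 : R ^ 2 - ‖x + z - c‖ ^ 2 ≤ parab c R (x + z) := le_max_right _ _
    have h2 : R ^ 2 - ‖x - z - c‖ ^ 2 ≤ parab c R (x - z) := le_max_right _ _
    have hpl := parallelogram_law_with_norm ℝ (x - c) z
    rw [show x - c + z = x + z - c by abel, show x - c - z = x - z - c by abel] at hpl
    have h3 : 2 * parab c R x - parab c R (x + z) - parab c R (x - z) ≤ 2 * ‖z‖ ^ 2 := by
      rw [hφ]; nlinarith
    have h4 : 2 * parab c R x - parab c R (x + z) - parab c R (x - z) ≤ 2 * R ^ 2 := by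
      have := parab_nonneg c R (x + z)
      have := parab_nonneg c R (x - z)
      rw [hφ]; nlinarith [sq_nonneg ‖x - c‖]
    have h5 : 1 / 2 * (2 * parab c R x - parab c R (x + z) - parab c R (x - z)) ≤
        R ^ 2 * min (‖z‖ ^ 2) 1 := by
      rw [mul_min_of_nonneg _ _ (sq_nonneg R)]
      refine le_min ?_ (by linarith)
      have : ‖z‖ ^ 2 ≤ R ^ 2 * ‖z‖ ^ 2 := le_mul_of_one_le_left (sq_nonneg _) (by nlinarith)
      linarith
    have h6 : tker ε z ≤ (‖z‖ ^ 5)⁻¹ := by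
      unfold tker; split_ifs
      · exact le_rfl
      · positivity
    calc 1 / 2 * (tker ε z * (2 * parab c R x - parab c R (x + z) - parab c R (x - z)))
        = tker ε z * (1 / 2 * (2 * parab c R x - parab c R (x + z) - parab c R (x - z))) := by ring
      _ ≤ tker ε z * (R ^ 2 * min (‖z‖ ^ 2) 1) := mul_le_mul_of_nonneg_left h5 (tker_nonneg _ _)
      _ ≤ (‖z‖ ^ 5)⁻¹ * (R ^ 2 * min (‖z‖ ^ 2) 1) := by gcongr
      _ = R ^ 2 * (min (‖z‖ ^ 2) 1 * (‖z‖ ^ 5)⁻¹) := by ring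
  · rw [Set.indicator_of_notMem hx]
    refine integral_nonpos fun z => ?_
    rw [parab_eq_zero hR0 hx, zero_sub]
    exact mul_nonpos_of_nonneg_of_nonpos (tker_nonneg _ _) (neg_nonpos.2 (parab_nonneg _ _ _))

/-! ### Polynomial growth of the right-hand side -/

/-- Second differences of a function with Hölder gradient, by the mean value inequality applied to
`ζ ↦ u (x + ζ) + u (x - ζ)`. -/
lemma second_diff_le {u : E4 → ℝ} (hu : Differentiable ℝ u) {C a : ℝ≥0} {x₁ : E4} {r : ℝ}
    (hH : HolderOnWith C a (fderiv ℝ u) (Metric.ball x₁ r)) {x z : E4}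
    (hx : ‖x - x₁‖ < r / 2) (hz : ‖z‖ < r / 2) :
    |2 * u x - u (x + z) - u (x - z)| ≤ C * (2 * ‖z‖) ^ (a : ℝ) * ‖z‖ := by
  have hmem : ∀ ζ : E4, ‖ζ‖ ≤ ‖z‖ → x + ζ ∈ Metric.ball x₁ r := by
    intro ζ hζ
    rw [mem_ball_iff_norm, show x + ζ - x₁ = (x - x₁) + ζ by abel]
    have := norm_add_le (x - x₁) ζ
    linarith
  have hder : ∀ ζ : E4, HasFDerivAt (fun ζ => u (x + ζ) + u (x - ζ))
      (fderiv ℝ u (x + ζ) - fderiv ℝ u (x - ζ)) ζ := by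
    intro ζ
    have h1 : HasFDerivAt (fun ζ : E4 => x + ζ) (ContinuousLinearMap.id ℝ E4) ζ :=
      (hasFDerivAt_id ζ).const_add x
    have h2 : HasFDerivAt (fun ζ : E4 => x - ζ) (-ContinuousLinearMap.id ℝ E4) ζ :=
      (hasFDerivAt_id ζ).const_sub x
    have h3 := ((hu (x + ζ)).hasFDerivAt.comp ζ h1).add ((hu (x - ζ)).hasFDerivAt.comp ζ h2)
    convert! h3 using 1
    ext w; simp [sub_eq_add_neg]
  have hb : ∀ ζ ∈ Metric.closedBall (0 : E4) ‖z‖,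
      ‖fderiv ℝ u (x + ζ) - fderiv ℝ u (x - ζ)‖ ≤ C * (2 * ‖z‖) ^ (a : ℝ) := by
    intro ζ hζ
    have hζ' : ‖ζ‖ ≤ ‖z‖ := by simpa using hζ
    have h1 := hmem ζ hζ'
    have h2 := hmem (-ζ) (by simpa using hζ')
    have h3 := hH.edist_le h1 h2
    rw [← sub_eq_add_neg] at h3
    have hd : edist (x + ζ) (x - ζ) ≤ ENNReal.ofReal (2 * ‖z‖) := by
      rw [edist_dist]
      refine ENNReal.ofReal_le_ofReal ?_
      rw [dist_eq_norm, show x + ζ - (x - ζ) = ζ + ζ by abel]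
      have := norm_add_le ζ ζ
      linarith
    have h4 : edist (fderiv ℝ u (x + ζ)) (fderiv ℝ u (x - ζ)) ≤
        ENNReal.ofReal (C * (2 * ‖z‖) ^ (a : ℝ)) := by
      refine h3.trans ?_
      rw [ENNReal.ofReal_mul C.coe_nonneg, ENNReal.ofReal_coe_nnreal,
        ← ENNReal.ofReal_rpow_of_nonneg (by positivity) a.coe_nonneg]
      gcongr
    rw [edist_dist, ENNReal.ofReal_le_ofReal_iff (by positivity), dist_eq_norm] at h4
    exact h4
  have hm := (convex_closedBall (0 : E4) ‖z‖).norm_image_sub_le_of_norm_hasFDerivWithin_le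
    (fun ζ _ => (hder ζ).hasFDerivWithinAt) hb (x := 0) (y := z) (by simp) (by simp)
  simp only [add_zero, sub_zero] at hm
  rwa [← Real.norm_eq_abs, ← norm_neg,
    show -(2 * u x - u (x + z) - u (x - z)) = u (x + z) + u (x - z) - (u x + u x) by ring]

/-- Near any point the truncated half-Laplacians of a `C^{1,α}` function in the weighted `L¹` space
are bounded, uniformly in the truncation. -/
lemma Lop_bound {u : E4 → ℝ} (hu : ContDiff ℝ 1 u) (hH : LocHolder4 (fderiv ℝ u))
    (hi : Integrable fun x : E4 => |u x| / (1 + ‖x‖ ^ 5)) (x₁ : E4) :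
    ∃ δ > 0, ∃ M, ∀ x ∈ Metric.ball x₁ δ, ∀ ε > 0, |Lop ε u x| ≤ M := by
  obtain ⟨C, a, r, hr, ha0, -, hC⟩ := hH x₁
  set ρ := r / 2 with hρ
  have hρ0 : 0 < ρ := by positivity
  obtain ⟨S, hS⟩ := (isCompact_closedBall x₁ ρ).exists_bound_of_continuousOn
    hu.continuous.continuousOn
  set X := ‖x₁‖ + ρ with hX
  set K := ((1 + X) / ρ + 1) ^ 5 with hK
  set w : E4 → ℝ := fun x => |u x| / (1 + ‖x‖ ^ 5) with hw
  have hI1 : Integrable fun z : E4 => (if ‖z‖ < ρ then ‖z‖ ^ ((a : ℝ) - 4) else 0) :=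
    integrable_near (by linarith) hρ0
  refine ⟨ρ, hρ0, 1 / 2 * (C * 2 ^ (a : ℝ) *
    (∫ z : E4, (if ‖z‖ < ρ then ‖z‖ ^ ((a : ℝ) - 4) else 0)) +
      2 * S * (∫ z, tker ρ z) + K * (∫ z, w z) + K * ∫ z, w z), fun x hx ε hε => ?_⟩
  have hxn : ‖x - x₁‖ < ρ := by simpa [dist_eq_norm] using hx
  have hxX : ‖x‖ ≤ X := by
    have := norm_add_le x₁ (x - x₁)
    rw [add_sub_cancel] at this
    linarith
  have hSx : |u x| ≤ S := hS x (by simpa [dist_eq_norm] using hxn.le)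
  have hw1 : ∫ z, w (x + z) = ∫ z, w z := integral_add_left_eq_self _ x
  have hw2 : ∫ z, w (x - z) = ∫ z, w z := integral_sub_left_eq_self _ _ x
  have hiw2 : Integrable fun z => w (x - z) := hi.comp_sub_left x
  have hiw1 : Integrable fun z => w (x + z) := hi.comp_add_left x
  have hg := (((hI1.const_mul (C * 2 ^ (a : ℝ))).add ((tker_integrable hρ0).const_mul (2 * S))).add
    (hiw1.const_mul K)).add (hiw2.const_mul K)
  have hmain := norm_integral_le_of_norm_le
    (f := fun z => tker ε z * (2 * u x - u (x + z) - u (x - z))) hg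
    (Eventually.of_forall fun z => ?_)
  · rw [integral_add' ((((hI1.const_mul (C * 2 ^ (a : ℝ))).add
      ((tker_integrable hρ0).const_mul (2 * S))).add (hiw1.const_mul K))) (hiw2.const_mul K),
      integral_add' ((hI1.const_mul (C * 2 ^ (a : ℝ))).add
      ((tker_integrable hρ0).const_mul (2 * S))) (hiw1.const_mul K),
      integral_add' (hI1.const_mul (C * 2 ^ (a : ℝ))) ((tker_integrable hρ0).const_mul (2 * S)),
      integral_const_mul, integral_const_mul, integral_const_mul, integral_const_mul, hw1, hw2,
      Real.norm_eq_abs] at hmain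
    rw [Lop_symm hε (integrable_tker_mul hu.continuous hi hε x), abs_mul,
      abs_of_pos (by norm_num : (0 : ℝ) < 1 / 2)]
    linarith
  · simp only [Pi.add_apply]
    rw [norm_mul, Real.norm_of_nonneg (tker_nonneg _ _), Real.norm_eq_abs]
    have hwn : ∀ y, 0 ≤ w y := fun y => by positivity
    have hK0 : 0 ≤ K := by positivity
    have hS0 : 0 ≤ S := (abs_nonneg _).trans hSx
    rcases lt_or_ge ‖z‖ ρ with hz | hz
    · rw [if_pos hz]
      have h1 : tker ε z * |2 * u x - u (x + z) - u (x - z)| ≤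
          C * 2 ^ (a : ℝ) * ‖z‖ ^ ((a : ℝ) - 4) := by
        by_cases h0 : ε ≤ ‖z‖
        · have hz0 : 0 < ‖z‖ := hε.trans_le h0
          rw [tker, if_pos h0, inv_mul_le_iff₀ (by positivity)]
          refine (second_diff_le (hu.differentiable (by norm_num)) hC hxn hz).trans (le_of_eq ?_)
          rw [Real.mul_rpow (by norm_num) hz0.le, Real.rpow_sub hz0]
          norm_num
          field_simp
        · rw [tker, if_neg h0, zero_mul]; positivity
      have h2 : 0 ≤ 2 * S * tker ρ z := mul_nonneg (by positivity) (tker_nonneg _ _)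
      have h3 := mul_nonneg hK0 (hwn (x + z))
      have h4 := mul_nonneg hK0 (hwn (x - z))
      linarith
    · rw [if_neg (not_lt.2 hz), mul_zero, zero_add]
      have h1 : tker ε z ≤ tker ρ z := by
        unfold tker; rw [if_pos hz]; split_ifs
        · exact le_rfl
        · positivity
      have h2 : |2 * u x - u (x + z) - u (x - z)| ≤ 2 * S + |u (x + z)| + |u (x - z)| := by
        have e1 := abs_sub (2 * u x - u (x + z)) (u (x - z))
        have e2 := abs_sub (2 * u x) (u (x + z))
        rw [abs_mul, abs_two] at e2
        linarith
      have h3 : tker ρ z * |u (x + z)| ≤ K * w (x + z) := by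
        have := mul_le_mul_of_nonneg_right (tker_le hρ0 hxX z) (abs_nonneg (u (x + z)))
        refine this.trans (le_of_eq ?_)
        simp only [hw, hK]; ring
      have h4 : tker ρ z * |u (x - z)| ≤ K * w (x - z) := by
        have := mul_le_mul_of_nonneg_right (tker_le hρ0 hxX (-z)) (abs_nonneg (u (x - z)))
        rw [tker_neg, ← sub_eq_add_neg] at this
        refine this.trans (le_of_eq ?_)
        simp only [hw, hK]; ring
      calc tker ε z * |2 * u x - u (x + z) - u (x - z)|
          ≤ tker ρ z * (2 * S + |u (x + z)| + |u (x - z)|) :=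
            mul_le_mul h1 h2 (abs_nonneg _) (tker_nonneg _ _)
        _ = 2 * S * tker ρ z + tker ρ z * |u (x + z)| + tker ρ z * |u (x - z)| := by ring
        _ ≤ _ := by linarith

lemma C4_nonneg : 0 ≤ C4 := by
  refine inv_nonneg.2 (integral_nonneg fun ζ => ?_)
  exact div_nonneg (sub_nonneg.2 (Real.cos_le_one _)) (by positivity)

lemma Lop_measurable {u : E4 → ℝ} (hu : Continuous u) (ε : ℝ) :
    AEStronglyMeasurable (Lop ε u) := by
  have hkm := tker_measurable ε
  have hum := hu.measurable
  apply AEStronglyMeasurable.integral_prod_right'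
    (f := fun q : E4 × E4 => tker ε q.2 * (u q.1 - u (q.1 + q.2)))
  apply Measurable.aestronglyMeasurable
  fun_prop

/-- If `(-Δ)^{1/2} u = h` with `u ≥ 0`, then `h` grows at most polynomially in the mean. This follows
by testing against `(R² - |x - c|²)₊` and moving the operator onto this test function. No sign or
integrability of `h` is needed, since `h` is locally a bounded limit. -/
lemma growth {u h : E4 → ℝ} (hu : ContDiff ℝ 1 u) (hH : LocHolder4 (fderiv ℝ u))
    (hi : Integrable fun x : E4 => |u x| / (1 + ‖x‖ ^ 5)) (hu0 : ∀ x, 0 ≤ u x)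
    (heq : ∀ x, HalfLapEq4 u x (h x)) (c : E4) :
    ∃ A, ∀ R : ℝ, 1 ≤ R → ∫ x, parab c R x * h x ≤ A * R ^ 7 := by
  set k0 := ∫ z : E4, min (‖z‖ ^ 2) 1 * (‖z‖ ^ 5)⁻¹ with hk0
  have hk0n : 0 ≤ k0 := integral_nonneg fun z => by positivity
  set I := ∫ x : E4, |u x| / (1 + ‖x‖ ^ 5) with hI
  have hI0 : 0 ≤ I := integral_nonneg fun z => by positivity
  refine ⟨C4 * (k0 * ((1 + (1 + ‖c‖) ^ 5) * I)), fun R hR => ?_⟩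
  have hR0 : 0 ≤ R := zero_le_one.trans hR
  have hcomp := isCompact_closedBall c R
  -- the local bounds of `Lop_bound` give a bound on the compact ball, hence domination below
  obtain ⟨M, hM⟩ : ∃ M, ∀ x ∈ Metric.closedBall c R, ∀ ε > 0, |Lop ε u x| ≤ M := by
    refine hcomp.induction_on (p := fun s => ∃ M, ∀ x ∈ s, ∀ ε > 0, |Lop ε u x| ≤ M) ⟨0, by simp⟩
      (fun s t hst ⟨M, hM⟩ => ⟨M, fun x hx => hM x (hst hx)⟩) ?_ ?_
    · rintro s t ⟨M, hM⟩ ⟨N, hN⟩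
      refine ⟨max M N, fun x hx ε hε => ?_⟩
      rcases hx with hx | hx
      · exact (hM x hx ε hε).trans (le_max_left _ _)
      · exact (hN x hx ε hε).trans (le_max_right _ _)
    · intro x _
      obtain ⟨δ, hδ, M, hM⟩ := Lop_bound hu hH hi x
      exact ⟨Metric.ball x δ, mem_nhdsWithin_of_mem_nhds (Metric.ball_mem_nhds x hδ), M, hM⟩
  have hlim : Tendsto (fun ε => ∫ x, parab c R x * (C4 * Lop ε u x)) (𝓝[>] 0)
      (𝓝 (∫ x, parab c R x * h x)) := by
    refine tendsto_integral_filter_of_dominated_convergence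
      (fun x => parab c R x * (C4 * M)) ?_ ?_ ((parab_integrable c hR0).mul_const _) ?_
    · refine Eventually.of_forall fun ε => ?_
      exact (parab_continuous c R).aestronglyMeasurable.mul
        ((Lop_measurable hu.continuous ε).const_mul C4)
    · filter_upwards [self_mem_nhdsWithin] with ε hε
      refine Eventually.of_forall fun x => ?_
      by_cases hx : x ∈ Metric.closedBall c R
      · rw [norm_mul, norm_mul, Real.norm_of_nonneg (parab_nonneg _ _ _),
          Real.norm_of_nonneg C4_nonneg, Real.norm_eq_abs]
        exact mul_le_mul_of_nonneg_left
          (mul_le_mul_of_nonneg_left (hM x hx ε hε) C4_nonneg) (parab_nonneg _ _ _)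
      · rw [parab_eq_zero hR0 hx]; simp
    · refine Eventually.of_forall fun x => Tendsto.const_mul _ ?_
      have := heq x
      unfold HalfLapEq4 at this
      simpa only [setIntegral_eq_Lop] using this
  have hball : ∫ x in Metric.closedBall c R, u x ≤ (1 + (1 + ‖c‖) ^ 5) * R ^ 5 * I := by
    rw [← integral_const_mul]
    refine (setIntegral_mono_on (hu.continuous.continuousOn.integrableOn_compact hcomp)
      ((hi.const_mul _).integrableOn) hcomp.measurableSet fun x hx => ?_).trans
      (setIntegral_le_integral (hi.const_mul _) (Eventually.of_forall fun x => by
        simp only [Pi.zero_apply]; positivity))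
    have hxn : ‖x‖ ≤ (1 + ‖c‖) * R := by
      have h1 : ‖x - c‖ ≤ R := by simpa [dist_eq_norm] using hx
      have h2 := norm_add_le c (x - c)
      rw [add_sub_cancel] at h2
      nlinarith [norm_nonneg c]
    rw [abs_of_nonneg (hu0 x), mul_div_assoc', le_div_iff₀ (by positivity), mul_comm]
    refine mul_le_mul_of_nonneg_right ?_ (hu0 x)
    have h3 := pow_le_pow_left₀ (norm_nonneg x) hxn 5
    rw [mul_pow] at h3
    have h4 := one_le_pow₀ hR (n := 5)
    linarith
  refine le_of_tendsto hlim ?_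
  filter_upwards [self_mem_nhdsWithin] with ε hε
  have e1 : ∫ x, parab c R x * (C4 * Lop ε u x) = C4 * ∫ x, u x * Lop ε (parab c R) x := by
    rw [← Lop_duality hu.continuous hi hε c hR0, ← integral_const_mul]
    refine integral_congr_ae (Eventually.of_forall fun x => ?_)
    simp only; ring
  have e2 : ∫ x, u x * Lop ε (parab c R) x ≤ R ^ 2 * k0 * ∫ x in Metric.closedBall c R, u x := by
    rw [← integral_const_mul, ← integral_indicator hcomp.measurableSet]
    have hind : Integrable ((Metric.closedBall c R).indicator fun x => R ^ 2 * k0 * u x) :=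
      (integrable_indicator_iff hcomp.measurableSet).2
        ((hu.continuous.continuousOn.integrableOn_compact hcomp).const_mul _)
    by_cases hInt : Integrable fun x => u x * Lop ε (parab c R) x
    · refine integral_mono hInt hind fun x => ?_
      refine (mul_le_mul_of_nonneg_left (Lop_parab_le hε c hR x) (hu0 x)).trans (le_of_eq ?_)
      by_cases hx : x ∈ Metric.closedBall c R
      · simp only [Set.indicator_of_mem hx]; ring
      · simp only [Set.indicator_of_notMem hx, mul_zero]
    · rw [integral_undef hInt]
      exact integral_nonneg fun x => Set.indicator_nonneg
        (fun x _ => mul_nonneg (by positivity) (hu0 x)) x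
  rw [e1]
  calc C4 * ∫ x, u x * Lop ε (parab c R) x
      ≤ C4 * (R ^ 2 * k0 * ((1 + (1 + ‖c‖) ^ 5) * R ^ 5 * I)) := by
        refine mul_le_mul_of_nonneg_left (e2.trans ?_) C4_nonneg
        exact mul_le_mul_of_nonneg_left hball (by positivity)
    _ = C4 * (k0 * ((1 + (1 + ‖c‖) ^ 5) * I)) * R ^ 7 := by ring

/-! ### Sign and constancy of the limit of the means -/

lemma contDiff_lap4 {n : WithTop ℕ∞} {w : E4 → ℝ} (hw : ContDiff ℝ (n + 2) w) :
    ContDiff ℝ n (lap4 w) := by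
  unfold lap4
  refine ContDiff.sum fun i _ => ?_
  have h1 : ContDiff ℝ (n + 1) (fun z => fderiv ℝ w z (EuclideanSpace.single i 1)) :=
    (hw.fderiv_right (by rw [add_assoc, one_add_one_eq_two])).clm_apply contDiff_const
  exact (h1.fderiv_right le_rfl).clm_apply contDiff_const

/-- The weighted mean as an integral over the ball itself. -/
lemma wmean_parab (k : ℕ) (g : E4 → ℝ) (x : E4) {r : ℝ} (hr : 0 < r) :
    wmean k g x r = (∫ y, g y * parab x r y ^ k) / (r ^ (2 * k) * r ^ 4) := by
  rw [wmean_rescale k g x hr, ← integral_div,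
    ← integral_add_left_eq_self (μ := (volume : Measure E4))
      (fun y => g y * parab x r y ^ k / (r ^ (2 * k) * r ^ 4)) x]
  refine integral_congr_ae (Eventually.of_forall fun y => ?_)
  simp only [parab, add_sub_cancel_left]
  rw [← pow_mul, mul_div_assoc', div_div]

lemma integrable_mul_parab {g : E4 → ℝ} (hg : Continuous g) (k : ℕ) (x : E4) {r : ℝ}
    (hr : 0 ≤ r) : Integrable fun y => g y * parab x r y ^ (k + 1) := by
  refine (hg.mul ((parab_continuous x r).pow _)).integrable_of_hasCompactSupport
    (HasCompactSupport.intro (isCompact_closedBall x r) fun y hy => ?_)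
  simp [parab_eq_zero hr hy]

/-- If the weighted means of `Δv` converge to a positive limit then the means of `v` grow
quadratically, so by Jensen those of `e^{pv}` grow like `e^{cR²}`, which polynomial growth forbids. -/
lemma limit_nonpos {p : ℝ} (hp : 0 < p) {v : E4 → ℝ} (hv : ContDiff ℝ 2 v) {x : E4} {A L : ℝ}
    (hA : ∀ R : ℝ, 1 ≤ R → ∫ y, parab x R y * Real.exp (p * v y) ≤ A * R ^ 7)
    (hL : Tendsto (wmean 2 (lap4 v) x) atTop (𝓝 L)) : L ≤ 0 := by
  by_contra! hL0
  obtain ⟨r0, hr0⟩ := eventually_atTop.1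
    ((hL.eventually_const_lt (half_lt_self hL0)).and (eventually_ge_atTop (1 : ℝ)))
  have hr1 : 1 ≤ r0 := (hr0 r0 le_rfl).2
  set δ := L / 2 with hδ
  have hδ0 : 0 < δ := by positivity
  set c := ∫ z, bump z ^ 1 with hc
  have hc0 : 0 < c := integral_bump_pos
  have hmono : MonotoneOn (fun r => wmean 1 v x r - δ / 8 * r ^ 2) (Set.Ici r0) := by
    have hd : ∀ r, HasDerivAt (fun r => wmean 1 v x r - δ / 8 * r ^ 2)
        (r / 4 * (wmean 2 (lap4 v) x r - δ)) r := by
      intro r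
      have h := (hasDerivAt_wmean hv 0 x r).sub ((hasDerivAt_pow 2 r).const_mul (δ / 8))
      convert! h using 1
      norm_num; ring
    refine monotoneOn_of_deriv_nonneg (convex_Ici r0)
      (fun r _ => (hd r).continuousAt.continuousWithinAt)
      (fun r _ => (hd r).differentiableAt.differentiableWithinAt) fun r hr => ?_
    rw [interior_Ici] at hr
    rw [(hd r).deriv]
    have hr' : r0 < r := hr
    have := (hr0 r hr'.le).1
    exact mul_nonneg (by linarith) (by linarith)
  set b := wmean 1 v x r0 - δ / 8 * r0 ^ 2 with hb
  have hmain : ∀ R, r0 ≤ R → c * (1 + p * (δ / 8 * R ^ 2 + b) / c) ≤ A * R := by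
    intro R hR
    have hR1 : 1 ≤ R := hr1.trans hR
    have hR0 : 0 < R := by linarith
    have h1 : δ / 8 * R ^ 2 + b ≤ wmean 1 v x R := by
      have := hmono (Set.self_mem_Ici) (Set.mem_Ici.2 hR) hR
      simp only at this
      linarith
    set m := wmean 1 v x R with hm
    set a := p * m / c with ha
    -- Jensen's inequality, via the tangent line of `exp` at the mean value `a` of `p v`
    have hline : Continuous fun z : E4 => x + R • z := by fun_prop
    have h2 : c * Real.exp a ≤ wmean 1 (fun y => Real.exp (p * v y)) x R := by
      have i1 : Integrable fun z => v (x + R • z) * bump z ^ 1 :=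
        integrable_mul_bump (hv.continuous.comp hline) 0
      have i2 : Integrable fun z => bump z ^ 1 := by
        simpa using integrable_mul_bump (g := fun _ => 1) continuous_const 0
      have i3 : Integrable fun z => Real.exp (p * v (x + R • z)) * bump z ^ 1 :=
        integrable_mul_bump (g := fun z => Real.exp (p * v (x + R • z)))
          (Real.continuous_exp.comp ((hv.continuous.comp hline).const_mul p)) 0
      have e : c * Real.exp a = ∫ z, (Real.exp a * p * (v (x + R • z) * bump z ^ 1) +
          Real.exp a * (1 - a) * bump z ^ 1) := by
        rw [integral_add (i1.const_mul _) (i2.const_mul _), integral_const_mul,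
          integral_const_mul]
        change _ = Real.exp a * p * m + Real.exp a * (1 - a) * c
        have : a * c = p * m := by rw [ha]; field_simp
        linear_combination Real.exp a * this
      rw [e]
      refine integral_mono ((i1.const_mul _).add (i2.const_mul _)) i3 fun z => ?_
      have ht : Real.exp a * (1 + p * v (x + R • z) - a) ≤ Real.exp (p * v (x + R • z)) := by
        have := mul_le_mul_of_nonneg_left (Real.add_one_le_exp (p * v (x + R • z) - a))
          (Real.exp_pos a).le
        rw [← Real.exp_add, add_sub_cancel] at this
        linarith
      have := mul_le_mul_of_nonneg_right ht (pow_nonneg (bump_nonneg z) 1)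
      simp only
      linarith
    have h3 : wmean 1 (fun y => Real.exp (p * v y)) x R ≤ A * R := by
      rw [wmean_parab 1 _ x hR0, div_le_iff₀ (by positivity)]
      calc ∫ y, Real.exp (p * v y) * parab x R y ^ 1
          = ∫ y, parab x R y * Real.exp (p * v y) := by simp only [pow_one, mul_comm]
        _ ≤ A * R ^ 7 := hA R hR1
        _ = _ := by ring
    have h4 : 1 + p * (δ / 8 * R ^ 2 + b) / c ≤ Real.exp a := by
      have := Real.add_one_le_exp a
      have : p * (δ / 8 * R ^ 2 + b) / c ≤ a := by rw [ha]; gcongr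
      linarith
    exact (mul_le_mul_of_nonneg_left h4 hc0.le).trans (h2.trans h3)
  -- a quadratic with positive leading coefficient `κ` is not dominated by a linear function
  set κ := p * (δ / 8) with hκ
  have hκ0 : 0 < κ := by positivity
  set R := r0 + (|A| + |c + p * b|) / κ with hR
  have hq : 0 ≤ (|A| + |c + p * b|) / κ := by positivity
  have h := hmain R (by linarith)
  have hexp : c * (1 + p * (δ / 8 * R ^ 2 + b) / c) = c + p * b + κ * R ^ 2 := by
    field_simp; ring
  rw [hexp] at h
  have h1 : κ * R = κ * r0 + (|A| + |c + p * b|) := by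
    rw [hR, mul_add, mul_div_cancel₀ _ hκ0.ne']
  have hR1 : 1 ≤ R := by linarith
  have h2 : κ * R ^ 2 = (κ * r0 + |A| + |c + p * b|) * R := by
    rw [pow_two, ← mul_assoc, h1]; ring
  have h3 : 0 < κ * r0 * R := by positivity
  have h4 := mul_le_mul_of_nonneg_right (le_abs_self A) (by linarith : 0 ≤ R)
  have h5 := mul_le_mul_of_nonneg_left hR1 (abs_nonneg (c + p * b))
  have h6 := neg_abs_le (c + p * b)
  nlinarith

/-- The ball `B(x, R)` lies in `B(y, R + |x - y|)`; this is the corresponding comparison of the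
weights. -/
lemma parab_compare (x y w : E4) {R : ℝ} (hR : 0 < R) :
    (R + ‖x - y‖) * parab x R w ≤ R * parab y (R + ‖x - y‖) w := by
  set d := ‖x - y‖ with hd
  have hd0 : 0 ≤ d := norm_nonneg _
  rcases lt_or_ge R ‖w - x‖ with h | h
  · rw [parab_eq_zero hR.le (by simpa [dist_eq_norm] using h), mul_zero]
    exact mul_nonneg hR.le (parab_nonneg _ _ _)
  · have ht := norm_nonneg (w - x)
    have hs : ‖w - y‖ ≤ ‖w - x‖ + d := by
      simpa using norm_add_le (w - x) (x - y)
    have hsn := norm_nonneg (w - y)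
    unfold parab
    rw [max_eq_right (by nlinarith)]
    refine le_trans ?_ (mul_le_mul_of_nonneg_left (le_max_right _ _) hR.le)
    have h2 : ‖w - y‖ ^ 2 ≤ (‖w - x‖ + d) ^ 2 := pow_le_pow_left₀ hsn hs 2
    have h3 : (R + d) * (R ^ 2 - ‖w - x‖ ^ 2) ≤ R * ((R + d) ^ 2 - (‖w - x‖ + d) ^ 2) := by
      have : R * ((R + d) ^ 2 - (‖w - x‖ + d) ^ 2) - (R + d) * (R ^ 2 - ‖w - x‖ ^ 2) =
        d * (R - ‖w - x‖) ^ 2 := by ring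
      nlinarith [mul_nonneg hd0 (sq_nonneg (R - ‖w - x‖))]
    refine h3.trans (mul_le_mul_of_nonneg_left (by linarith) hR.le)

/-- A Liouville-type comparison for the large-scale means of a nonnegative function. As the roles of
the two centres can be exchanged, the limit does not depend on the centre. -/
lemma limit_le_limit {F : E4 → ℝ} (hF : Continuous F) (hF0 : ∀ x, 0 ≤ F x) {x y : E4} {a b : ℝ}
    (ha : Tendsto (wmean 2 F x) atTop (𝓝 a)) (hb : Tendsto (wmean 2 F y) atTop (𝓝 b)) :
    a ≤ b := by
  set d := ‖x - y‖ with hd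
  have hd0 : 0 ≤ d := norm_nonneg _
  have hb' : Tendsto (fun R => (1 + d / R) ^ 6 * wmean 2 F y (R + d)) atTop (𝓝 b) := by
    have h1 : Tendsto (fun R : ℝ => (1 + d / R) ^ 6) atTop (𝓝 ((1 + 0) ^ 6)) :=
      ((tendsto_const_nhds.div_atTop tendsto_id).const_add 1).pow 6
    have h2 := h1.mul (hb.comp (tendsto_atTop_add_const_right _ d tendsto_id))
    simpa using h2
  refine le_of_tendsto_of_tendsto ha hb' ?_
  filter_upwards [eventually_gt_atTop 0] with R hR
  have hT : 0 < R + d := by linarith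
  rw [wmean_parab 2 F x hR, wmean_parab 2 F y hT]
  have key : (R + d) ^ 2 * ∫ w, F w * parab x R w ^ 2 ≤
      R ^ 2 * ∫ w, F w * parab y (R + d) w ^ 2 := by
    rw [← integral_const_mul, ← integral_const_mul]
    refine integral_mono ((integrable_mul_parab hF 1 x hR.le).const_mul _)
      ((integrable_mul_parab hF 1 y hT.le).const_mul _) fun w => ?_
    have h := pow_le_pow_left₀ (mul_nonneg hT.le (parab_nonneg x R w)) (parab_compare x y w hR) 2
    have := mul_le_mul_of_nonneg_left h (hF0 w)
    simp only
    rw [mul_pow, mul_pow] at this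
    linarith
  have e : (1 + d / R) ^ 6 * ((∫ w, F w * parab y (R + d) w ^ 2) /
      ((R + d) ^ (2 * 2) * (R + d) ^ 4)) =
      (R ^ 2 * ∫ w, F w * parab y (R + d) w ^ 2) / ((R + d) ^ 2 * R ^ 8) := by
    rw [one_add_div hR.ne']
    field_simp
    ring
  rw [e, le_div_iff₀ (by positivity), show R ^ (2 * 2) * R ^ 4 = R ^ 8 by ring]
  refine le_trans (le_of_eq ?_) key
  field_simp

lemma P4_nonneg (u : E4 → ℝ) (y : E4) : 0 ≤ P4 u y :=
  mul_nonneg (integral_nonneg fun z => by positivity) (sq_nonneg _)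

lemma P4_integrable {u : E4 → ℝ} (h : FiniteMass4 u) : Integrable (P4 u) := by
  have h' : Integrable (fun q : E4 × E4 => u q.1 ^ 2 * u q.2 ^ 2 / ‖q.1 - q.2‖ ^ 2)
    ((volume : Measure E4).prod volume) := h
  refine h'.integral_prod_left.congr (Eventually.of_forall fun y => ?_)
  simp only [P4]
  rw [mul_comm, ← integral_const_mul]
  refine integral_congr_ae (Eventually.of_forall fun z => ?_)
  simp only [mul_div_assoc]

theorem stmt13 (p : ℝ) (hp : 0 < p) (u v : E4 → ℝ)
    (hsol : IsSolution4 p u v)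
    (hu_nonneg : ∀ x : E4, 0 ≤ u x)
    (hmass : FiniteMass4 u) :
    ∃ C : ℝ, 0 ≤ C ∧ ∀ x : E4,
      lap4 v x =
        -(1 / (4 * Real.pi ^ 2) * (∫ y : E4, P4 u y / ‖x - y‖ ^ 2)) - C := by
  have hlap : lap4 (lap4 v) = P4 u := funext hsol.eq_v
  have hf : ContDiff ℝ 2 (lap4 v) := contDiff_lap4 (hsol.v_C4.of_le (by norm_num))
  have hPc : Continuous (lap4 (lap4 v)) :=
    (contDiff_lap4 (n := 0) (hf.of_le (by norm_num))).continuous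
  have hlim := tendsto_wmean hf hPc (fun y => by rw [hlap]; exact P4_nonneg u y)
    (by rw [hlap]; exact P4_integrable hmass)
  rw [hlap] at hlim
  set N : E4 → ℝ := fun x => 1 / (4 * Real.pi ^ 2) * ∫ y, P4 u y / ‖x - y‖ ^ 2 with hN
  have hN0 : ∀ x, 0 ≤ N x := fun x => mul_nonneg (by positivity)
    (integral_nonneg fun y => div_nonneg (P4_nonneg u y) (by positivity))
  have hπ : 0 < Real.pi ^ 2 / 12 := by positivity
  have hh : ∀ x, lap4 v x + N x ≤ 0 := by
    intro x
    obtain ⟨A, hA⟩ := growth hsol.u_C1 hsol.u_grad_holder hsol.u_int hu_nonneg hsol.eq_u x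
    have := limit_nonpos hp (hsol.v_C4.of_le (by norm_num)) hA (hlim x)
    exact nonpos_of_mul_nonpos_right this hπ
  have hneg : ∀ x, Tendsto (wmean 2 (fun y => -lap4 v y) x) atTop
      (𝓝 (-(Real.pi ^ 2 / 12 * (lap4 v x + N x)))) := by
    intro x
    refine (hlim x).neg.congr fun r => ?_
    simp only [wmean, neg_mul, integral_neg]
  have hle : ∀ x y, lap4 v y + N y ≤ lap4 v x + N x := by
    intro x y
    have := limit_le_limit hf.continuous.neg
      (fun w => neg_nonneg.2 (by linarith [hh w, hN0 w])) (hneg x) (hneg y)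
    exact le_of_mul_le_mul_left (neg_le_neg_iff.1 this) hπ
  refine ⟨-(lap4 v 0 + N 0), by linarith [hh 0], fun x => ?_⟩
  change lap4 v x = -N x - -(lap4 v 0 + N 0)
  linarith [hle x 0, hle 0 x]
end
end

section
/- Let p > 0 and let (u,v) be a classical solution of the system (S₄) on ℝ⁴ such that u ≥ 0 on ℝ⁴, the finite total mass condition ∬_{ℝ⁴×ℝ⁴} u²(x)u²(y)/|x−y|² dx dy < ∞ holds, and v(x)/|x|² → 0 as |x| → ∞. Then for all x ∈ ℝ⁴: Δv(x) = −(1/(4π²)) ∫_{ℝ⁴} P₄(y)/|x−y|² dy. -/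
/-!
The formula is a consequence of `v ∈ C⁴`, `Δ²v = P ≥ 0` and `v = o(|x|²)`. After a translation it
is needed at the origin only.

Let `Γ` be a smooth radial function on `ℝ⁴` which equals `1/|y|²` for `|y| ≥ 1` and vanishes near
the origin, of the form `θ(|y|²)/|y|²` with `θ` nondecreasing. Since `1/|y|²` is harmonic off the
origin, `ψ = ΔΓ` has compact support, and a computation in polar coordinates gives `∫ ψ = -4π²`
(`integral_lap4_Gam`). The functions `Φ_a(y) = a² Γ(ay) - a⁻² Γ(y/a)` are smooth, compactly
supported, and increase pointwise to `1/|y|²` as `a → ∞`. Green's identity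
(`integral_lap4_mul`), used once more on the outer term, gives

  `∫ Δ²v(y) Φ_a(y) dy = ∫ Δv(z/a) ψ(z) dz - ∫ a⁻² v(az) Δψ(z) dz`.

As `a → ∞` the first term on the right tends to `-4π² Δv(0)` (`tendsto_inner`), and the second to
`0` because `v` grows subquadratically (`tendsto_outer`). As `Δ²v ≥ 0`, monotone convergence
identifies the limit of the left side with `∫ Δ²v(y)/|y|² dy` (`representation_zero`); finiteness
of this integral comes out of the same step.
-/

open MeasureTheory Filter Topology
open scoped NNReal

noncomputable section

/-! ### The Laplacian: calculus and Green's identity -/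

/-- Coordinate directions of `ℝ⁴`. -/
abbrev ee (i : Fin 4) : E4 := EuclideanSpace.single i (1 : ℝ)

lemma contDiff_partial {m n : ℕ} {g : E4 → ℝ} (hg : ContDiff ℝ n g) (h : m + 1 ≤ n) (e : E4) :
    ContDiff ℝ m (fun z => fderiv ℝ g z e) :=
  (hg.fderiv_right (m := m) (by exact_mod_cast h)).clm_apply contDiff_const

lemma contDiff_lap4_s14 {m n : ℕ} {g : E4 → ℝ} (hg : ContDiff ℝ n g) (h : m + 2 ≤ n) :
    ContDiff ℝ m (lap4 g) := by
  unfold lap4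
  refine ContDiff.sum fun i _ => ?_
  exact contDiff_partial (n := m + 1)
    (contDiff_partial (m := m + 1) hg (by omega) _) le_rfl _

lemma lap4_translate (g : E4 → ℝ) (x : E4) :
    lap4 (fun y => g (x + y)) = fun y => lap4 g (x + y) := by
  funext y
  unfold lap4
  refine Finset.sum_congr rfl fun i _ => ?_
  simp only [fderiv_comp_add_left]
  rw [fderiv_comp_add_left (f := fun z => fderiv ℝ g z (EuclideanSpace.single i 1)) x]

lemma lap4_scale (g : E4 → ℝ) (hg : ContDiff ℝ 2 g) (c a : ℝ) (y : E4) :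
    lap4 (fun z => c * g (a • z)) y = c * a ^ 2 * lap4 g (a • y) := by
  have hd : ∀ i, ContDiff ℝ 1 (fun z => fderiv ℝ g z (ee i)) := fun i =>
    contDiff_partial (m := 1) (n := 2) hg (by norm_num) _
  have h0 : ∀ (k : E4 → ℝ), Differentiable ℝ k → ∀ (b : ℝ) (z e : E4),
      fderiv ℝ (fun z => b * k (a • z)) z e = b * a * fderiv ℝ k (a • z) e := by
    intro k hk b z e
    have h1 : HasFDerivAt (fun z : E4 => a • z) (a • ContinuousLinearMap.id ℝ E4) z :=
      (hasFDerivAt_id z).const_smul a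
    have h2 := ((hk (a • z)).hasFDerivAt.comp z h1).const_mul b
    have h3 : fderiv ℝ (fun z => b * k (a • z)) z = _ := h2.fderiv
    rw [h3]
    simp
    ring
  unfold lap4
  rw [Finset.mul_sum]
  refine Finset.sum_congr rfl fun i _ => ?_
  simp only [h0 g (hg.differentiable (by norm_num))]
  rw [h0 _ ((hd i).differentiable (by norm_num))]
  ring

lemma lap4_sub (f g : E4 → ℝ) (hf : ContDiff ℝ 2 f) (hg : ContDiff ℝ 2 g) (y : E4) :
    lap4 (fun z => f z - g z) y = lap4 f y - lap4 g y := by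
  have hdf : ∀ i, ContDiff ℝ 1 (fun z => fderiv ℝ f z (ee i)) := fun i =>
    contDiff_partial (m := 1) (n := 2) hf (by norm_num) _
  have hdg : ∀ i, ContDiff ℝ 1 (fun z => fderiv ℝ g z (ee i)) := fun i =>
    contDiff_partial (m := 1) (n := 2) hg (by norm_num) _
  unfold lap4
  rw [← Finset.sum_sub_distrib]
  refine Finset.sum_congr rfl fun i _ => ?_
  have h1 : (fun z => fderiv ℝ (fun z => f z - g z) z (EuclideanSpace.single i 1)) =
      fun z => fderiv ℝ f z (ee i) - fderiv ℝ g z (ee i) := by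
    funext z
    rw [fderiv_fun_sub (hf.differentiable (by norm_num) z) (hg.differentiable (by norm_num) z)]
    rfl
  rw [h1, fderiv_fun_sub ((hdf i).differentiable (by norm_num) y)
    ((hdg i).differentiable (by norm_num) y)]
  rfl

lemma hasCompactSupport_lap4 {g : E4 → ℝ} (hg : HasCompactSupport g) :
    HasCompactSupport (lap4 g) := by
  refine HasCompactSupport.of_support_subset_isCompact (K := tsupport g) hg ?_
  intro y hy
  by_contra hy'
  apply hy
  unfold lap4
  refine Finset.sum_eq_zero fun i _ => ?_
  have h2 : y ∉ tsupport (fun z => fderiv ℝ (fun z => fderiv ℝ g z (ee i)) z (ee i)) := fun h =>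
    hy' (tsupport_fderiv_apply_subset ℝ _ (tsupport_fderiv_apply_subset ℝ _ h))
  exact image_eq_zero_of_notMem_tsupport
    (f := fun z => fderiv ℝ (fun z => fderiv ℝ g z (ee i)) z (ee i)) h2

/-- Green's second identity against a compactly supported function. -/
lemma integral_lap4_mul (f g : E4 → ℝ) (hf : ContDiff ℝ 2 f) (hg : ContDiff ℝ 2 g)
    (hc : HasCompactSupport g) :
    ∫ y, lap4 f y * g y = ∫ y, f y * lap4 g y := by
  have hdf : ∀ i, ContDiff ℝ 1 (fun z => fderiv ℝ f z (ee i)) := fun i =>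
    contDiff_partial (m := 1) (n := 2) hf (by norm_num) _
  have hdg : ∀ i, ContDiff ℝ 1 (fun z => fderiv ℝ g z (ee i)) := fun i =>
    contDiff_partial (m := 1) (n := 2) hg (by norm_num) _
  have hddf : ∀ i, Continuous (fun z => fderiv ℝ (fun z => fderiv ℝ f z (ee i)) z (ee i)) :=
    fun i => (contDiff_partial (m := 0) (n := 1) (hdf i) (by norm_num) _).continuous
  have hddg : ∀ i, Continuous (fun z => fderiv ℝ (fun z => fderiv ℝ g z (ee i)) z (ee i)) :=
    fun i => (contDiff_partial (m := 0) (n := 1) (hdg i) (by norm_num) _).continuous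
  have hcg : ∀ i, HasCompactSupport (fun z => fderiv ℝ g z (ee i)) := fun i =>
    hc.fderiv_apply ℝ _
  have hccg : ∀ i, HasCompactSupport
      (fun z => fderiv ℝ (fun z => fderiv ℝ g z (ee i)) z (ee i)) := fun i =>
    (hcg i).fderiv_apply ℝ _
  have i1 : ∀ i, Integrable
      (fun y => fderiv ℝ (fun z => fderiv ℝ f z (ee i)) y (ee i) * g y) := fun i =>
    ((hddf i).mul hg.continuous).integrable_of_hasCompactSupport hc.mul_left
  have i2 : ∀ i, Integrable
      (fun y => fderiv ℝ f y (ee i) * fderiv ℝ g y (ee i)) := fun i =>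
    ((hdf i).continuous.mul (hdg i).continuous).integrable_of_hasCompactSupport (hcg i).mul_left
  have i3 : ∀ i, Integrable
      (fun y => f y * fderiv ℝ (fun z => fderiv ℝ g z (ee i)) y (ee i)) := fun i =>
    (hf.continuous.mul (hddg i)).integrable_of_hasCompactSupport (hccg i).mul_left
  have i4 : ∀ i, Integrable (fun y => fderiv ℝ f y (ee i) * g y) := fun i =>
    ((hdf i).continuous.mul hg.continuous).integrable_of_hasCompactSupport hc.mul_left
  have i5 : ∀ i, Integrable (fun y => f y * fderiv ℝ g y (ee i)) := fun i =>
    (hf.continuous.mul (hdg i).continuous).integrable_of_hasCompactSupport (hcg i).mul_left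
  unfold lap4
  simp only [Finset.sum_mul, Finset.mul_sum]
  rw [integral_finsetSum _ (fun i _ => i1 i), integral_finsetSum _ (fun i _ => i3 i)]
  refine Finset.sum_congr rfl fun i _ => ?_
  have e1 := integral_mul_fderiv_eq_neg_fderiv_mul_of_integrable (μ := volume)
    (f := fun z => fderiv ℝ f z (ee i)) (g := g) (v := ee i) (i1 i) (i2 i) (i4 i)
    (fun x _ => (hdf i).differentiable (by norm_num) x)
    (fun x _ => hg.differentiable (by norm_num) x)
  have e2 := integral_mul_fderiv_eq_neg_fderiv_mul_of_integrable (μ := volume)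
    (f := f) (g := fun z => fderiv ℝ g z (ee i)) (v := ee i) (i2 i) (i3 i) (i5 i)
    (fun x _ => hf.differentiable (by norm_num) x)
    (fun x _ => (hdg i).differentiable (by norm_num) x)
  rw [e2, e1, neg_neg]

/-! ### The regularized fundamental solution -/

/-- A smooth nondecreasing step: `0` for `s ≤ 1/2` and `1` for `s ≥ 1`. -/
def step (s : ℝ) : ℝ := Real.smoothTransition (2 * s - 1)

lemma step_mono : Monotone step := fun a b h =>
  Real.smoothTransition.monotone (by linarith)

lemma step_zero {s : ℝ} (h : s ≤ 1 / 2) : step s = 0 :=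
  Real.smoothTransition.zero_of_nonpos (by linarith)

lemma step_one {s : ℝ} (h : 1 ≤ s) : step s = 1 :=
  Real.smoothTransition.one_of_one_le (by linarith)

lemma step_contDiff (n : ℕ) : ContDiff ℝ n step :=
  (Real.smoothTransition.contDiff (n := n)).comp (by fun_prop)

/-- The radial profile, in the variable `s = |y|²`, of the regularized kernel: it equals `1/s`
for `s ≥ 1` and vanishes for `s ≤ 1/2`. -/
def prof (s : ℝ) : ℝ := step s / s

lemma prof_contDiff (n : ℕ) : ContDiff ℝ n prof := by
  rw [contDiff_iff_contDiffAt]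
  intro s
  rcases lt_or_ge s (1 / 2) with h | h
  · have : prof =ᶠ[𝓝 s] fun _ => 0 := by
      filter_upwards [gt_mem_nhds h] with t ht
      simp [prof, step_zero ht.le]
    exact contDiffAt_const.congr_of_eventuallyEq this
  · exact (step_contDiff n).contDiffAt.div contDiffAt_id (by simp; linarith)

/-- The kernel `1/|y|²`, smoothly cut off near the origin. -/
def Gam (y : E4) : ℝ := prof (‖y‖ ^ 2)

lemma Gam_contDiff (n : ℕ) : ContDiff ℝ n Gam :=
  (prof_contDiff n).comp (contDiff_norm_sq ℝ)

/-- In dimension `4`, `Δ(f(|y|²)) = 4|y|² f'' + 8 f'`. -/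
lemma lap4_radial (f : ℝ → ℝ) (hf : ContDiff ℝ 2 f) (y : E4) :
    lap4 (fun z => f (‖z‖ ^ 2)) y =
      4 * ‖y‖ ^ 2 * deriv (deriv f) (‖y‖ ^ 2) + 8 * deriv f (‖y‖ ^ 2) := by
  have hf' : ContDiff ℝ 1 (deriv f) := hf.deriv'
  have hrad : ∀ (k : ℝ → ℝ), Differentiable ℝ k → ∀ z : E4,
      HasFDerivAt (fun z : E4 => k (‖z‖ ^ 2))
        (deriv k (‖z‖ ^ 2) • ((2 : ℝ) • innerSL ℝ z)) z := by
    intro k hk z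
    have h1 := (hasStrictFDerivAt_norm_sq (F := E4) z).hasFDerivAt
    have := (hk (‖z‖ ^ 2)).hasDerivAt.comp_hasFDerivAt z h1
    convert! this using 2
    ext; simp
  have hin : ∀ (z : E4) (i : Fin 4), inner ℝ z (ee i) = z i := by
    intro z i
    simp [EuclideanSpace.inner_single_right]
  have hone : ∀ (z : E4) (i : Fin 4),
      fderiv ℝ (fun z => f (‖z‖ ^ 2)) z (ee i) = 2 * z i * deriv f (‖z‖ ^ 2) := by
    intro z i
    rw [(hrad f (hf.differentiable (by norm_num)) z).fderiv]
    simp [hin]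
    ring
  have htwo : ∀ i : Fin 4, fderiv ℝ (fun z => fderiv ℝ (fun z => f (‖z‖ ^ 2)) z
      (EuclideanSpace.single i 1)) y (EuclideanSpace.single i 1) =
      4 * y i ^ 2 * deriv (deriv f) (‖y‖ ^ 2) + 2 * deriv f (‖y‖ ^ 2) := by
    intro i
    have : (fun z => fderiv ℝ (fun z => f (‖z‖ ^ 2)) z (EuclideanSpace.single i 1)) =
      fun z : E4 => 2 * z i * deriv f (‖z‖ ^ 2) := funext fun z => hone z i
    rw [this]
    have hc : HasFDerivAt (fun z : E4 => 2 * z i)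
        ((2 : ℝ) • (EuclideanSpace.proj i : E4 →L[ℝ] ℝ)) y :=
      (EuclideanSpace.proj i : E4 →L[ℝ] ℝ).hasFDerivAt.const_mul 2
    have := (hc.mul (hrad (deriv f) (hf'.differentiable (by norm_num)) y)).fderiv
    have h3 : fderiv ℝ (fun z : E4 => 2 * z i * deriv f (‖z‖ ^ 2)) y = _ := this
    rw [h3]
    simp [hin]
    ring
  unfold lap4
  rw [Finset.sum_congr rfl fun i _ => htwo i, EuclideanSpace.norm_sq_eq]
  simp [Fin.sum_univ_four]
  ring

lemma lap4_Gam_eq (y : E4) : lap4 Gam y =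
    4 * ‖y‖ ^ 2 * deriv (deriv prof) (‖y‖ ^ 2) + 8 * deriv prof (‖y‖ ^ 2) :=
  lap4_radial prof (prof_contDiff 2) y

lemma deriv_prof_of_one_lt {s : ℝ} (h : 1 < s) : deriv prof s = -(s ^ 2)⁻¹ := by
  have : prof =ᶠ[𝓝 s] fun t => t⁻¹ := by
    filter_upwards [lt_mem_nhds h] with t ht
    simp [prof, step_one ht.le]
  rw [this.deriv_eq, deriv_inv]

lemma deriv2_prof_of_one_lt {s : ℝ} (h : 1 < s) : deriv (deriv prof) s = 2 * (s ^ 3)⁻¹ := by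
  have : deriv prof =ᶠ[𝓝 s] fun t => -(t ^ 2)⁻¹ := by
    filter_upwards [lt_mem_nhds h] with t ht
    exact deriv_prof_of_one_lt ht
  have hs : s ≠ 0 := by linarith
  have h2 : HasDerivAt (fun t : ℝ => -(t ^ 2)⁻¹) (2 * (s ^ 3)⁻¹) s := by
    convert! ((hasDerivAt_pow 2 s).inv (by positivity)).neg using 1
    field_simp
    norm_num
  rw [this.deriv_eq, h2.deriv]

/-- `1/|y|²` is harmonic off the origin, so `ΔΓ` lives in the unit ball. -/
lemma lap4_Gam_compact : HasCompactSupport (lap4 Gam) := by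
  refine HasCompactSupport.of_support_subset_isCompact (isCompact_closedBall (0 : E4) 1) ?_
  intro y hy
  by_contra hy'
  have h1 : 1 < ‖y‖ := by simpa using hy'
  have h2 : 1 < ‖y‖ ^ 2 := by nlinarith
  apply hy
  rw [lap4_Gam_eq, deriv_prof_of_one_lt h2, deriv2_prof_of_one_lt h2]
  field_simp
  norm_num

lemma lap4_Gam_contDiff (n : ℕ) : ContDiff ℝ n (lap4 Gam) :=
  contDiff_lap4_s14 (n := n + 2) (Gam_contDiff _) le_rfl

lemma lap4_Gam_integrable : Integrable (lap4 Gam) :=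
  (lap4_Gam_contDiff 0).continuous.integrable_of_hasCompactSupport lap4_Gam_compact

/-- The total mass of `ΔΓ`: in polar coordinates the radial integrand `r³ ΔΓ` is the derivative
of `2 r⁴ f'(r²)`, which is `-2` for `r > 1`; and `|S³| = 2π²`. -/
lemma integral_lap4_Gam : ∫ y, lap4 Gam y = -(4 * Real.pi ^ 2) := by
  set k : ℝ → ℝ := fun r => 4 * r ^ 2 * deriv (deriv prof) (r ^ 2) + 8 * deriv prof (r ^ 2)
    with hk
  have hd1 : ContDiff ℝ 1 (deriv prof) := (prof_contDiff 2).deriv'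
  have hd2 : Continuous (deriv (deriv prof)) := hd1.continuous_deriv_one
  have h1 : ∫ y, lap4 Gam y = ∫ y : E4, k ‖y‖ := by
    refine integral_congr_ae (Eventually.of_forall fun y => ?_)
    simp only [lap4_Gam_eq, hk]
  have hkc : Continuous k := by
    have := hd1.continuous
    fun_prop
  have hk0 : ∀ r : ℝ, 1 < r → k r = 0 := by
    intro r hr
    have h2 : 1 < r ^ 2 := by nlinarith
    simp only [hk]
    rw [deriv_prof_of_one_lt h2, deriv2_prof_of_one_lt h2]
    field_simp
    norm_num
  have hF : ∀ r : ℝ, HasDerivAt (fun r => 2 * r ^ 4 * deriv prof (r ^ 2)) (r ^ 3 * k r) r := by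
    intro r
    have a1 : HasDerivAt (fun r : ℝ => deriv prof (r ^ 2))
        (deriv (deriv prof) (r ^ 2) * (2 * r)) r := by
      have := (hd1.differentiable (by norm_num) (r ^ 2)).hasDerivAt.comp r (hasDerivAt_pow 2 r)
      convert! this using 1
      simp
    have a2 : HasDerivAt (fun r : ℝ => 2 * r ^ 4) (8 * r ^ 3) r := by
      convert! (hasDerivAt_pow 4 r).const_mul 2 using 1
      norm_num; ring
    convert! a2.mul a1 using 1
    simp only [hk]
    ring
  have hint : IntegrableOn (fun r => r ^ 3 * k r) (Set.Ioi 0) := by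
    apply Integrable.integrableOn
    refine Continuous.integrable_of_hasCompactSupport (by fun_prop) ?_
    refine HasCompactSupport.of_support_subset_isCompact (isCompact_Icc (a := (-1 : ℝ)) (b := 1)) ?_
    intro r hr
    by_contra hr'
    apply hr
    have : 1 < |r| := by
      by_contra hh
      exact hr' (abs_le.1 (not_lt.1 hh))
    have h3 : k r = k |r| := by simp only [hk, sq_abs]
    simp only [h3, hk0 _ this, mul_zero]
  have hlim : Tendsto (fun r : ℝ => 2 * r ^ 4 * deriv prof (r ^ 2)) atTop (𝓝 (-2)) := by
    refine tendsto_const_nhds.congr' ?_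
    filter_upwards [eventually_gt_atTop 1] with r hr
    have h2 : 1 < r ^ 2 := by nlinarith
    rw [deriv_prof_of_one_lt h2]
    field_simp
  have hI := integral_Ioi_of_hasDerivAt_of_tendsto' (a := 0) (fun r _ => hF r) hint hlim
  rw [h1, integral_fun_norm_addHaar]
  have hdim : Module.finrank ℝ E4 = 4 := by simp
  have hvol : (volume : Measure E4).real (Metric.ball 0 1) = Real.pi ^ 2 / 2 := by
    rw [Measure.real, InnerProductSpace.volume_ball_of_dim_even (k := 2) (by simp)]
    simp
    positivity
  rw [hdim, hvol]
  simp only [smul_eq_mul, nsmul_eq_mul]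
  norm_num at hI ⊢
  rw [hI]
  ring

/-- Monotonicity of the rescaled kernels in `a` is visible on the right-hand side; at `y = 0` both
sides are `0` by the convention `t / 0 = 0`. -/
lemma scaled_Gam {a : ℝ} (ha : a ≠ 0) (y : E4) :
    a ^ 2 * Gam (a • y) = step (a ^ 2 * ‖y‖ ^ 2) / ‖y‖ ^ 2 := by
  have h : ‖a • y‖ ^ 2 = a ^ 2 * ‖y‖ ^ 2 := by rw [norm_smul, mul_pow, Real.norm_eq_abs, sq_abs]
  unfold Gam prof
  rw [h]
  rcases eq_or_ne y 0 with rfl | hy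
  · simp
  · have : ‖y‖ ≠ 0 := by simpa using hy
    field_simp

/-- The compactly supported truncation, to the shell between radii about `1/a` and `a`, of the
kernel `1/|y|²`. -/
def Phi (a : ℝ) (y : E4) : ℝ := a ^ 2 * Gam (a • y) - a⁻¹ ^ 2 * Gam (a⁻¹ • y)

lemma Phi_eq {a : ℝ} (ha : 0 < a) (y : E4) :
    Phi a y = (step (a ^ 2 * ‖y‖ ^ 2) - step (a⁻¹ ^ 2 * ‖y‖ ^ 2)) / ‖y‖ ^ 2 := by
  rw [Phi, scaled_Gam ha.ne', scaled_Gam (inv_ne_zero ha.ne'), sub_div]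

lemma contDiff_scaled (n : ℕ) (a c : ℝ) : ContDiff ℝ n (fun y => c * Gam (a • y)) :=
  contDiff_const.mul ((Gam_contDiff n).comp (contDiff_const_smul a))

lemma Phi_contDiff (n : ℕ) (a : ℝ) : ContDiff ℝ n (Phi a) :=
  (contDiff_scaled n a _).sub (contDiff_scaled n a⁻¹ _)

lemma Phi_compact {a : ℝ} (ha : 1 ≤ a) : HasCompactSupport (Phi a) := by
  have ha0 : 0 < a := by linarith
  refine HasCompactSupport.of_support_subset_isCompact (isCompact_closedBall (0 : E4) a) ?_
  intro y hy
  by_contra hy'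
  have h1 : a < ‖y‖ := by simpa using hy'
  apply hy
  have h2 : 1 ≤ a⁻¹ ^ 2 * ‖y‖ ^ 2 := by
    rw [← mul_pow]
    apply one_le_pow₀
    rw [inv_mul_eq_div, le_div_iff₀ ha0]
    linarith
  have h3 : 1 ≤ a ^ 2 * ‖y‖ ^ 2 := by
    rw [← mul_pow]
    apply one_le_pow₀
    nlinarith
  rw [Phi_eq ha0, step_one h2, step_one h3]
  simp

lemma Phi_mono {a b : ℝ} (ha : 1 ≤ a) (hab : a ≤ b) (y : E4) : Phi a y ≤ Phi b y := by
  have ha0 : 0 < a := by linarith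
  have hb0 : 0 < b := by linarith
  rw [Phi_eq ha0, Phi_eq hb0]
  have h1 : step (a ^ 2 * ‖y‖ ^ 2) ≤ step (b ^ 2 * ‖y‖ ^ 2) := step_mono (by gcongr)
  have h2 : step (b⁻¹ ^ 2 * ‖y‖ ^ 2) ≤ step (a⁻¹ ^ 2 * ‖y‖ ^ 2) := step_mono (by gcongr)
  gcongr

lemma Phi_nonneg {a : ℝ} (ha : 1 ≤ a) (y : E4) : 0 ≤ Phi a y := by
  have : Phi 1 y = 0 := by simp [Phi]
  exact this ▸ Phi_mono le_rfl ha y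

lemma Phi_tendsto (y : E4) :
    Tendsto (fun n : ℕ => Phi (n + 1) y) atTop (𝓝 (1 / ‖y‖ ^ 2)) := by
  rcases eq_or_ne y 0 with rfl | hy
  · have : ∀ n : ℕ, Phi (n + 1) (0 : E4) = 0 := fun n => by
      rw [Phi_eq (by positivity)]; simp
    simp [this]
  have hy0 : 0 < ‖y‖ := norm_pos_iff.2 hy
  have hN : Tendsto (fun n : ℕ => ((n : ℝ) + 1)) atTop atTop :=
    tendsto_atTop_add_const_right _ _ tendsto_natCast_atTop_atTop
  have h1 : Tendsto (fun n : ℕ => ((n : ℝ) + 1) ^ 2 * ‖y‖ ^ 2) atTop atTop :=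
    ((tendsto_pow_atTop two_ne_zero).comp hN).atTop_mul_const (by positivity)
  have h2 : Tendsto (fun n : ℕ => ((n : ℝ) + 1)⁻¹ ^ 2 * ‖y‖ ^ 2) atTop (𝓝 0) := by
    simpa using ((tendsto_inv_atTop_zero.comp hN).pow 2).mul_const (‖y‖ ^ 2)
  refine tendsto_const_nhds.congr' ?_
  filter_upwards [h1.eventually_ge_atTop 1, h2.eventually_le_const (show (0 : ℝ) < 1 / 2 by norm_num)]
    with n hn1 hn2
  rw [Phi_eq (by positivity), step_one hn1, step_zero hn2, sub_zero]

lemma lap4_Phi (a : ℝ) (y : E4) : lap4 (Phi a) y =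
    a ^ 4 * lap4 Gam (a • y) - a⁻¹ ^ 4 * lap4 Gam (a⁻¹ • y) := by
  unfold Phi
  rw [lap4_sub _ _ (contDiff_scaled 2 _ _) (contDiff_scaled 2 _ _),
    lap4_scale _ (Gam_contDiff 2), lap4_scale _ (Gam_contDiff 2)]
  ring

lemma integral_scaled {a : ℝ} (ha : 0 < a) (W k : E4 → ℝ) :
    ∫ y, W y * (a ^ 4 * k (a • y)) = ∫ z, W (a⁻¹ • z) * k z := by
  have h := Measure.integral_comp_smul (volume : Measure E4) (fun z => W (a⁻¹ • z) * k z) a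
  simp only [smul_smul, inv_mul_cancel₀ ha.ne', one_smul] at h
  have hd : Module.finrank ℝ E4 = 4 := by simp
  rw [hd, abs_of_pos (by positivity), smul_eq_mul] at h
  calc ∫ y, W y * (a ^ 4 * k (a • y)) = ∫ y, a ^ 4 * (W y * k (a • y)) := by
        congr 1; funext y; ring
    _ = a ^ 4 * ∫ y, W y * k (a • y) := integral_const_mul _ _
    _ = _ := by rw [h]; field_simp

/-! ### The representation formula at the origin -/

lemma compact_scaled {k : E4 → ℝ} (hk : HasCompactSupport k) {a : ℝ} (ha : a ≠ 0) (c : ℝ) :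
    HasCompactSupport (fun y => c * k (a • y)) :=
  (hk.comp_homeomorph (Homeomorph.smulOfNeZero a ha)).mul_left

/-- Pairing the two Laplacians with the truncated kernel; the outer cutoff error is moved onto `V`
by a further integration by parts. -/
lemma integral_lap4_lap4_mul_Phi (V : E4 → ℝ) (hV : ContDiff ℝ 4 V) {a : ℝ} (ha : 1 ≤ a) :
    ∫ y, lap4 (lap4 V) y * Phi a y =
      (∫ z, lap4 V (a⁻¹ • z) * lap4 Gam z)
        - ∫ z, a⁻¹ ^ 2 * V (a • z) * lap4 (lap4 Gam) z := by
  have ha0 : 0 < a := by linarith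
  have hW : ContDiff ℝ 2 (lap4 V) := contDiff_lap4_s14 (m := 2) (n := 4) hV (by norm_num)
  have hψ := lap4_Gam_contDiff 2
  have hψc : ∀ b c : ℝ, Continuous (fun y => c * lap4 Gam (b • y)) := fun b c => by
    have := hψ.continuous
    fun_prop
  rw [integral_lap4_mul _ _ hW (Phi_contDiff 2 a) (Phi_compact ha)]
  simp only [lap4_Phi, mul_sub]
  rw [integral_sub]
  · rw [integral_scaled ha0]
    congr 1
    have e : ∀ y, lap4 V y * (a⁻¹ ^ 4 * lap4 Gam (a⁻¹ • y)) =
      lap4 V y * (fun y => a⁻¹ ^ 4 * lap4 Gam (a⁻¹ • y)) y := fun y => rfl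
    simp only [e]
    rw [integral_lap4_mul V (fun y => a⁻¹ ^ 4 * lap4 Gam (a⁻¹ • y)) (hV.of_le (by norm_num))
      (contDiff_const.mul (hψ.comp (contDiff_const_smul _)))
      (compact_scaled lap4_Gam_compact (inv_ne_zero ha0.ne') _)]
    have e2 : ∀ y, V y * lap4 (fun y => a⁻¹ ^ 4 * lap4 Gam (a⁻¹ • y)) y =
        (a⁻¹ ^ 2 * V y) * (a⁻¹ ^ 4 * lap4 (lap4 Gam) (a⁻¹ • y)) := fun y => by
      rw [lap4_scale _ hψ]; ring
    simp only [e2]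
    rw [integral_scaled (inv_pos.2 ha0) (fun y => a⁻¹ ^ 2 * V y) (lap4 (lap4 Gam))]
    simp
  · exact (hW.continuous.mul (hψc _ _)).integrable_of_hasCompactSupport
      (compact_scaled lap4_Gam_compact ha0.ne' _).mul_left
  · exact (hW.continuous.mul (hψc _ _)).integrable_of_hasCompactSupport
      (compact_scaled lap4_Gam_compact (inv_ne_zero ha0.ne') _).mul_left

/-- Inner limit: `ΔΓ`, concentrated at the origin, is `-4π²` times an approximate identity. -/
lemma tendsto_inner (W : E4 → ℝ) (hW : Continuous W) :
    Tendsto (fun n : ℕ => ∫ z, W (((n : ℝ) + 1)⁻¹ • z) * lap4 Gam z) atTop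
      (𝓝 (-(4 * Real.pi ^ 2) * W 0)) := by
  have hψ := (lap4_Gam_contDiff 0).continuous
  have hlim : ∫ z, W 0 * lap4 Gam z = -(4 * Real.pi ^ 2) * W 0 := by
    rw [integral_const_mul, integral_lap4_Gam]; ring
  rw [← hlim]
  obtain ⟨M, hM⟩ := (isCompact_closedBall (0 : E4) 1).exists_bound_of_continuousOn hW.continuousOn
  obtain ⟨R, hR⟩ := lap4_Gam_compact.isCompact.isBounded.subset_closedBall (0 : E4)
  have hN : Tendsto (fun n : ℕ => ((n : ℝ) + 1)) atTop atTop :=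
    tendsto_atTop_add_const_right _ _ tendsto_natCast_atTop_atTop
  refine tendsto_integral_filter_of_dominated_convergence (fun z => M * ‖lap4 Gam z‖) ?_ ?_
    (lap4_Gam_integrable.norm.const_mul M) ?_
  · exact Eventually.of_forall fun n => by
      apply Continuous.aestronglyMeasurable
      fun_prop
  · filter_upwards [hN.eventually_ge_atTop R] with n hn
    refine Eventually.of_forall fun z => ?_
    rw [norm_mul]
    by_cases hz : z ∈ tsupport (lap4 Gam)
    · gcongr
      apply hM
      have h1 : ‖z‖ ≤ R := by simpa using hR hz
      have h2 : (0 : ℝ) < n + 1 := by positivity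
      simp only [Metric.mem_closedBall, dist_zero_right, norm_smul, norm_inv, Real.norm_eq_abs,
        abs_of_pos h2]
      rw [inv_mul_eq_div, div_le_one h2]
      linarith
    · simp [image_eq_zero_of_notMem_tsupport hz]
  · refine Eventually.of_forall fun z => ?_
    refine Tendsto.mul_const _ ?_
    have h1 : Tendsto (fun n : ℕ => ((n : ℝ) + 1)⁻¹ • z) atTop (𝓝 0) := by
      simpa using (tendsto_inv_atTop_zero.comp hN).smul_const z
    exact (hW.tendsto 0).comp h1

/-- Outer limit: subquadratic growth kills the outer cutoff error. -/
lemma tendsto_outer (V : E4 → ℝ) (hV : Continuous V)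
    (hgr : ∀ ε > 0, ∃ C, 0 ≤ C ∧ ∀ y, |V y| ≤ ε * ‖y‖ ^ 2 + C) :
    Tendsto (fun n : ℕ => ∫ z, ((n : ℝ) + 1)⁻¹ ^ 2 * V (((n : ℝ) + 1) • z) * lap4 (lap4 Gam) z)
      atTop (𝓝 0) := by
  have hχ : Continuous (lap4 (lap4 Gam)) :=
    (contDiff_lap4_s14 (m := 0) (n := 2) (lap4_Gam_contDiff 2) (by norm_num)).continuous
  have hχc : HasCompactSupport (lap4 (lap4 Gam)) := hasCompactSupport_lap4 lap4_Gam_compact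
  have hN : Tendsto (fun n : ℕ => ((n : ℝ) + 1)) atTop atTop :=
    tendsto_atTop_add_const_right _ _ tendsto_natCast_atTop_atTop
  have hN' : Tendsto (fun n : ℕ => ((n : ℝ) + 1)⁻¹) atTop (𝓝 0) := tendsto_inv_atTop_zero.comp hN
  have key : ∀ ε C : ℝ, (∀ y, |V y| ≤ ε * ‖y‖ ^ 2 + C) → ∀ (n : ℕ) (z : E4),
      |((n : ℝ) + 1)⁻¹ ^ 2 * V (((n : ℝ) + 1) • z)| ≤
        ε * ‖z‖ ^ 2 + C * ((n : ℝ) + 1)⁻¹ ^ 2 := by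
    intro ε C h n z
    have h2 : (0 : ℝ) < n + 1 := by positivity
    have h1 := h (((n : ℝ) + 1) • z)
    rw [norm_smul, Real.norm_eq_abs, abs_of_pos h2] at h1
    rw [abs_mul, abs_of_pos (by positivity)]
    calc _ ≤ ((n : ℝ) + 1)⁻¹ ^ 2 * (ε * (((n : ℝ) + 1) * ‖z‖) ^ 2 + C) := by gcongr
      _ = _ := by field_simp
  obtain ⟨C1, hC1, hb1⟩ := hgr 1 one_pos
  have h0 : (0 : ℝ) = ∫ _ : E4, (0 : ℝ) := by simp
  rw [h0]
  refine tendsto_integral_of_dominated_convergence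
    (fun z => (1 * ‖z‖ ^ 2 + C1) * ‖lap4 (lap4 Gam) z‖) ?_ ?_ ?_ ?_
  · intro n
    apply Continuous.aestronglyMeasurable
    fun_prop
  · refine Continuous.integrable_of_hasCompactSupport (by fun_prop) ?_
    exact hχc.norm.mul_left
  · intro n
    refine Eventually.of_forall fun z => ?_
    rw [norm_mul]
    gcongr
    refine (key 1 C1 hb1 n z).trans ?_
    have : ((n : ℝ) + 1)⁻¹ ^ 2 ≤ 1 := by
      apply pow_le_one₀ (by positivity)
      apply inv_le_one_of_one_le₀
      linarith [(Nat.cast_nonneg n : (0 : ℝ) ≤ n)]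
    nlinarith
  · refine Eventually.of_forall fun z => ?_
    rw [show (0 : ℝ) = 0 * lap4 (lap4 Gam) z by simp]
    refine Tendsto.mul_const _ ?_
    rw [Metric.tendsto_nhds]
    intro δ hδ
    set ε := δ / (2 * (‖z‖ ^ 2 + 1)) with hε
    have hε0 : 0 < ε := by positivity
    have hεz : ε * ‖z‖ ^ 2 < δ / 2 := by
      have : ε * (‖z‖ ^ 2 + 1) = δ / 2 := by rw [hε]; field_simp
      nlinarith
    obtain ⟨C, hC, hb⟩ := hgr ε hε0
    have hlim : Tendsto (fun n : ℕ => C * ((n : ℝ) + 1)⁻¹ ^ 2) atTop (𝓝 0) := by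
      simpa using (hN'.pow 2).const_mul C
    filter_upwards [hlim.eventually_lt_const (half_pos hδ)] with n hn
    rw [dist_zero_right, Real.norm_eq_abs]
    linarith [key ε C hb n z]

/-- If `Δ²V ≥ 0` and `V = o(|y|²)`, then `ΔV(0)` is minus the Newtonian potential of `Δ²V` at `0`. -/
lemma representation_zero (V : E4 → ℝ) (hV : ContDiff ℝ 4 V)
    (hgr : ∀ ε > 0, ∃ C, 0 ≤ C ∧ ∀ y, |V y| ≤ ε * ‖y‖ ^ 2 + C)
    (hpos : ∀ y, 0 ≤ lap4 (lap4 V) y) :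
    ∫ y, lap4 (lap4 V) y / ‖y‖ ^ 2 = -(4 * Real.pi ^ 2) * lap4 V 0 := by
  have hW : ContDiff ℝ 2 (lap4 V) := contDiff_lap4_s14 (m := 2) (n := 4) hV (by norm_num)
  have hP : Continuous (lap4 (lap4 V)) :=
    (contDiff_lap4_s14 (m := 0) (n := 2) hW (by norm_num)).continuous
  set L := -(4 * Real.pi ^ 2) * lap4 V 0 with hL
  have h1n : ∀ n : ℕ, (1 : ℝ) ≤ n + 1 := fun n => by
    linarith [(Nat.cast_nonneg n : (0 : ℝ) ≤ n)]
  have hlim : Tendsto (fun n : ℕ => ∫ y, lap4 (lap4 V) y * Phi (n + 1) y) atTop (𝓝 L) := by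
    have := (tendsto_inner (lap4 V) hW.continuous).sub (tendsto_outer V hV.continuous hgr)
    rw [sub_zero] at this
    refine this.congr fun n => ?_
    rw [integral_lap4_lap4_mul_Phi V hV (h1n n)]
  have hnn : ∀ (n : ℕ) y, 0 ≤ lap4 (lap4 V) y * Phi (n + 1) y := fun n y =>
    mul_nonneg (hpos y) (Phi_nonneg (h1n n) y)
  have hL0 : 0 ≤ L := ge_of_tendsto' hlim fun n => integral_nonneg (hnn n)
  have hcont : ∀ n : ℕ, Continuous (fun y => lap4 (lap4 V) y * Phi (n + 1) y) := fun n =>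
    hP.mul (Phi_contDiff 0 _).continuous
  have hint : ∀ n : ℕ, Integrable (fun y => lap4 (lap4 V) y * Phi (n + 1) y) := fun n =>
    (hcont n).integrable_of_hasCompactSupport (Phi_compact (h1n n)).mul_left
  have hmct : Tendsto (fun n : ℕ => ∫⁻ y, ENNReal.ofReal (lap4 (lap4 V) y * Phi (n + 1) y)) atTop
      (𝓝 (∫⁻ y, ENNReal.ofReal (lap4 (lap4 V) y / ‖y‖ ^ 2))) := by
    refine lintegral_tendsto_of_tendsto_of_monotone
      (fun n => (hcont n).measurable.ennreal_ofReal.aemeasurable) ?_ ?_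
    · refine Eventually.of_forall fun y => ?_
      intro m n hmn
      refine ENNReal.ofReal_le_ofReal (mul_le_mul_of_nonneg_left ?_ (hpos y))
      exact Phi_mono (h1n m) (by gcongr) y
    · refine Eventually.of_forall fun y => ?_
      refine ENNReal.tendsto_ofReal ?_
      have := (Phi_tendsto y).const_mul (lap4 (lap4 V) y)
      rwa [mul_one_div] at this
  have hmct' : Tendsto (fun n : ℕ => ∫⁻ y, ENNReal.ofReal (lap4 (lap4 V) y * Phi (n + 1) y)) atTop
      (𝓝 (ENNReal.ofReal L)) := by
    refine (ENNReal.tendsto_ofReal hlim).congr fun n => ?_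
    exact ofReal_integral_eq_lintegral_ofReal (hint n) (Eventually.of_forall (hnn n))
  have heq := tendsto_nhds_unique hmct hmct'
  rw [integral_eq_lintegral_of_nonneg_ae, heq, ENNReal.toReal_ofReal hL0]
  · exact Eventually.of_forall fun y => div_nonneg (hpos y) (by positivity)
  · exact (hP.measurable.div (by fun_prop)).aestronglyMeasurable

/-! ### Growth of translates and positivity -/

lemma growth_translate (v : E4 → ℝ) (hv : Continuous v)
    (hv_decay : Tendsto (fun x : E4 => v x / ‖x‖ ^ 2) (cocompact E4) (𝓝 0)) (x : E4) :
    ∀ ε > 0, ∃ C, 0 ≤ C ∧ ∀ y, |v (x + y)| ≤ ε * ‖y‖ ^ 2 + C := by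
  intro ε hε
  have h1 : ∀ᶠ z in cocompact E4, |v z / ‖z‖ ^ 2| < ε / 2 := by
    have := (Metric.tendsto_nhds.1 hv_decay) (ε / 2) (by positivity)
    simpa only [Real.dist_eq, sub_zero] using this
  obtain ⟨K, hK, hKs⟩ := mem_cocompact.1 h1
  obtain ⟨M, hM⟩ := hK.exists_bound_of_continuousOn hv.continuousOn
  have hb : ∀ z, |v z| ≤ ε / 2 * ‖z‖ ^ 2 + (|M| + |v 0|) := by
    intro z
    by_cases hz : z ∈ K
    · have := hM z hz
      rw [Real.norm_eq_abs] at this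
      have h3 : 0 ≤ ε / 2 * ‖z‖ ^ 2 := by positivity
      linarith [le_abs_self M, abs_nonneg (v 0)]
    · rcases eq_or_ne z 0 with rfl | hz0
      · simp
      have hz1 : 0 < ‖z‖ ^ 2 := by
        have := norm_pos_iff.2 hz0
        positivity
      have h2 : |v z / ‖z‖ ^ 2| < ε / 2 := hKs hz
      rw [abs_div, abs_of_pos hz1, div_lt_iff₀ hz1] at h2
      linarith [abs_nonneg M, abs_nonneg (v 0)]
  refine ⟨ε * ‖x‖ ^ 2 + (|M| + |v 0|), by positivity, fun y => ?_⟩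
  have h2 : ‖x + y‖ ^ 2 ≤ 2 * ‖x‖ ^ 2 + 2 * ‖y‖ ^ 2 := by
    have := norm_add_le x y
    nlinarith [sq_nonneg (‖x‖ - ‖y‖), norm_nonneg (x + y)]
  nlinarith [hb (x + y)]

theorem stmt14 (p : ℝ) (hp : 0 < p) (u v : E4 → ℝ)
    (hsol : IsSolution4 p u v)
    (hu_nonneg : ∀ x : E4, 0 ≤ u x)
    (hmass : FiniteMass4 u)
    (hv_decay : Tendsto (fun x : E4 => v x / ‖x‖ ^ 2) (cocompact E4) (𝓝 0)) :
    ∀ x : E4, lap4 v x =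
      -(1 / (4 * Real.pi ^ 2) * (∫ y : E4, P4 u y / ‖x - y‖ ^ 2)) := by
  intro x
  have hlap : lap4 (lap4 v) = P4 u := funext hsol.eq_v
  have ht : lap4 (lap4 fun y => v (x + y)) = fun y => P4 u (x + y) := by
    rw [lap4_translate, lap4_translate, hlap]
  have h := representation_zero (fun y => v (x + y))
    (hsol.v_C4.comp (contDiff_const.add contDiff_id))
    (growth_translate v hsol.v_C4.continuous hv_decay x)
    (fun y => by rw [ht]; exact P4_nonneg u _)
  rw [ht, lap4_translate] at h
  simp only [add_zero] at h
  have htr : ∫ y : E4, P4 u y / ‖x - y‖ ^ 2 = ∫ y : E4, P4 u (x + y) / ‖y‖ ^ 2 := by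
    rw [← integral_add_left_eq_self (fun y : E4 => P4 u y / ‖x - y‖ ^ 2) x]
    simp
  rw [htr, h]
  field_simp
end
end
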